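/- arXiv:2002.05577 — 2 statements merged into one kernel-verified Lean document; each statement's English description precedes it below -/
import Mathlib

section
/- Let k ≥ 3 and let A = (a_{i,j}) satisfy the hypotheses of the cluster-uniqueness theorem (conditions (1) and (2)), with all entries of A sufficiently large. Fix nonnegative rationals α_1, …, α_k with ∑_{ℓ=1}^k α_ℓ = 1 such that at least two of them are strictly positive. Then, along integers n for which all α_ℓ·n are integers, the probability under the RSBM G^n_A that there exist subsets C'_ℓ ⊆ C_ℓ with |C'_ℓ| = α_ℓ·n for each ℓ, with D = ∪_{ℓ=1}^k C'_ℓ, together with a partition of the remaining vertices into sets D_2, …, D_k each of size n, such that simultaneously (i) the induced subgraph on D is a_{1,1}-regular, and (ii) the induced subgraph on D_i is a_{i,i}-regular, the bipartite subgraph between D_i and D_j is a_{i,j}-bipartite-regular, and the bipartite subgraph between D and D_i is a_{1,i}-bipartite-regular for all distinct i, j ∈ {2,…,k}, tends to 0 as n → ∞. -/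
/-!
The proof is a first-moment argument over the partitions `q` other than the planted one `p` that
are compatible with the graph. It uses the randomness of only one bipartite subgraph.

Let `q` be the partition into the sets `D_i`, and suppose that it splits some cluster of `p`. Colour
vertices by `q`, let `c i` be the majority colour of the cluster `i` of `p`, and let `u` be the
largest number, over all clusters, of vertices without the majority colour, attained in the
cluster `j`. Then `u` is linear in `n` and at most `(1 - 1 / k) n` (`exists_nearby`). As `q` differs
from `c ∘ p` in at most `k u` places, there are at most `(3 k n / u) ^ (k u)` such `q`
(`card_nearby`).

Fix `q`, another cluster `l`, and all edges outside the bipartite graph between the clusters `l`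
and `j`. Compatibility with `q` prescribes, for every vertex of cluster `l`, its number of
neighbours in the set `U` of the `u` exceptional vertices of cluster `j`
(`card_bip_inter_eq_forced`). Exchanging the bipartite graph with an independent one bounds the
probability that `q` is compatible by the probability `π` that a uniform `a`-regular bipartite
graph, `a = a l j`, has a prescribed degree sequence into `U` (`card_compat_inter_le`). In the
configuration model these degrees are hypergeometric, and the passage to simple graphs costs a
polynomial factor because a configuration with boundedly many parallel edges is made simple by
boundedly many switchings (`card_confF_le`, `card_breg_pattern`). A hypergeometric pattern is, up to
a polynomial factor, at most a product of `n` atoms of the binomial distribution with parameters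
`a` and `x = u / n` (`prod_choose_le`).

It remains to beat the entropy `(3 k / x) ^ (k u)` when `a` is large (`entropy_le`). For
`a x ≤ 1 / 2` the product is at most `(a x) ^ (a u)`. For `a x` bounded, each atom is at most `3 / 4`,
while the entropy per vertex is `O(log a / a)`. For `a x` large, the atoms are as small as desired,
while the entropy per vertex is bounded in terms of `k`. In all cases the union bound is a
polynomial in `n` times `θ ^ n` with `θ < 1`.
-/

open Filter

/-- `degIn G v S` is the number of neighbours of `v` lying in the set `S`. -/
noncomputable def degIn {V : Type} (G : SimpleGraph V) (v : V) (S : Set V) : ℕ :=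
  (S ∩ G.neighborSet v).ncard

/-- `p` partitions the `k * n` labelled vertices into `k` labelled clusters of size `n`. -/
def IsEquiPartition (k n : ℕ) (p : Fin (k * n) → Fin k) : Prop :=
  ∀ i : Fin k, (p ⁻¹' {i}).ncard = n

/-- The graph `G` is compatible with the partition `p`: every vertex of cluster `i` has
exactly `a i j` neighbours in cluster `j`. -/
def Compat (k n : ℕ) (a : Fin k → Fin k → ℕ) (p : Fin (k * n) → Fin k)
    (G : SimpleGraph (Fin (k * n))) : Prop :=
  ∀ v : Fin (k * n), ∀ j : Fin k, degIn G v (p ⁻¹' {j}) = a (p v) j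

/-- Probability under the RSBM (uniform distribution on compatible (partition, graph) pairs)
of an event depending on the partition and the graph. -/
noncomputable def rsbmP (k n : ℕ) (a : Fin k → Fin k → ℕ)
    (E : (Fin (k * n) → Fin k) → SimpleGraph (Fin (k * n)) → Prop) : ℝ :=
  (({pg : (Fin (k * n) → Fin k) × SimpleGraph (Fin (k * n)) |
      IsEquiPartition k n pg.1 ∧ Compat k n a pg.1 pg.2 ∧ E pg.1 pg.2}).ncard : ℝ) /
    (({pg : (Fin (k * n) → Fin k) × SimpleGraph (Fin (k * n)) |
      IsEquiPartition k n pg.1 ∧ Compat k n a pg.1 pg.2}).ncard : ℝ)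

/-! ### Switchings in the bipartite configuration model -/

/-- Configurations of the bipartite `a`-regular model on two copies of `Fin n`: each of the `a`
half-edges `(v, s)` at a left vertex `v` is sent to a right vertex, and every right vertex is hit
`a` times. The half-edges on the right are not labelled. -/
def confF (n a : ℕ) : Finset (Fin n × Fin a → Fin n) :=
  Finset.univ.filter fun f => ∀ w, (Finset.univ.filter fun x => f x = w).card = a

/-- The ordered pairs of distinct half-edges that are parallel in the configuration `f`. -/
def defects {n a : ℕ} (f : Fin n × Fin a → Fin n) : Finset ((Fin n × Fin a) × (Fin n × Fin a)) :=
  Finset.univ.filter fun z => z.1 ≠ z.2 ∧ z.1.1 = z.2.1 ∧ f z.1 = f z.2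

/-- The configurations without parallel edges. -/
def confSimple (n a : ℕ) : Finset (Fin n × Fin a → Fin n) :=
  (confF n a).filter fun f => (defects f).card = 0

lemma mem_confF {n a : ℕ} {f : Fin n × Fin a → Fin n} :
    f ∈ confF n a ↔ ∀ w, (Finset.univ.filter fun x => f x = w).card = a := by
  simp [confF]

lemma confF_comp {n a : ℕ} {f : Fin n × Fin a → Fin n} (hf : f ∈ confF n a)
    (σ : Equiv.Perm (Fin n × Fin a)) : f ∘ σ ∈ confF n a := by
  rw [mem_confF] at *
  intro w
  refine Eq.trans ?_ (hf w)
  refine Finset.card_bij (fun x _ => σ x) ?_ ?_ ?_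
  · simp
  · intro x _ y _ h; exact σ.injective h
  · intro y hy; exact ⟨σ.symm y, by simpa using hy, by simp⟩

/-- By symmetry of the half-edges, the number of configurations in which `x` and `y` have the same
image does not depend on `y ≠ x`. -/
lemma card_collide {n a : ℕ} {x y y' : Fin n × Fin a} (h : x ≠ y) (h' : x ≠ y') :
    ((confF n a).filter fun f => f x = f y).card = ((confF n a).filter fun f => f x = f y').card := by
  have key : ∀ {y y' : Fin n × Fin a}, x ≠ y → x ≠ y' →
      ((confF n a).filter fun f => f x = f y).card ≤
        ((confF n a).filter fun f => f x = f y').card := by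
    intro y y' h h'
    refine Finset.card_le_card_of_injOn (fun f => f ∘ Equiv.swap y y') ?_ ?_
    · intro f hf
      simp only [Finset.coe_filter, Set.mem_ofPred_eq] at hf ⊢
      refine ⟨confF_comp hf.1 _, ?_⟩
      simp [Equiv.swap_apply_of_ne_of_ne h h', hf.2]
    · intro f _ g _ hfg
      exact (Equiv.swap y y').surjective.injective_comp_right hfg
  exact le_antisymm (key h h') (key h' h)

lemma card_collide_mul {n a : ℕ} {x y : Fin n × Fin a} (h : x ≠ y) :
    (n * a - 1) * ((confF n a).filter fun f => f x = f y).card = (confF n a).card * (a - 1) := by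
  have h1 : ∑ y' ∈ Finset.univ.erase x, ((confF n a).filter fun f => f x = f y').card =
      (n * a - 1) * ((confF n a).filter fun f => f x = f y).card := by
    rw [Finset.sum_congr rfl (g := fun _ => ((confF n a).filter fun f => f x = f y).card)]
    · simp [Finset.card_erase_of_mem]
    · intro y' hy'
      exact card_collide (by simpa using (Finset.ne_of_mem_erase hy').symm) h
  rw [← h1]
  have h2 : ∀ f ∈ confF n a, ((Finset.univ.erase x).filter fun y' => f x = f y').card = a - 1 := by
    intro f hf
    have h3 : ((Finset.univ.erase x).filter fun y' => f x = f y') =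
        (Finset.univ.filter fun y' => f y' = f x).erase x := by
      ext z; simp [eq_comm, and_comm]
    rw [h3, Finset.card_erase_of_mem (by simp)]
    exact congrArg (· - 1) (mem_confF.1 hf (f x))
  have h4 := Finset.sum_card_bipartiteAbove_eq_sum_card_bipartiteBelow
    (s := Finset.univ.erase x) (t := confF n a) (fun y' f => f x = f y')
  simp only [Finset.bipartiteAbove, Finset.bipartiteBelow] at h4
  rw [h4, Finset.sum_congr rfl h2]
  simp

/-- The average number of defects of a configuration is bounded independently of `n`, since two
given half-edges collide with probability `(a - 1) / (n a - 1)`. -/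
lemma sum_defects (n a : ℕ) :
    (n * a - 1) * ∑ f ∈ confF n a, (defects f).card ≤ (confF n a).card * (n * a * a * a) := by
  have h4 := Finset.sum_card_bipartiteAbove_eq_sum_card_bipartiteBelow
    (s := (Finset.univ : Finset ((Fin n × Fin a) × (Fin n × Fin a))).filter
      fun z => z.1 ≠ z.2 ∧ z.1.1 = z.2.1) (t := confF n a) (fun z f => f z.1 = f z.2)
  have h5 : ∀ f : Fin n × Fin a → Fin n, Finset.bipartiteBelow (fun z f => f z.1 = f z.2)
      ((Finset.univ : Finset ((Fin n × Fin a) × (Fin n × Fin a))).filter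
      fun z => z.1 ≠ z.2 ∧ z.1.1 = z.2.1) f = defects f := by
    intro f; ext z; simp [Finset.bipartiteBelow, defects, and_assoc]
  simp only [h5] at h4
  rw [← h4, Finset.mul_sum]
  have h6 : ∀ z ∈ (Finset.univ : Finset ((Fin n × Fin a) × (Fin n × Fin a))).filter
      (fun z => z.1 ≠ z.2 ∧ z.1.1 = z.2.1),
      (n * a - 1) * (Finset.bipartiteAbove (fun z (f : Fin n × Fin a → Fin n) => f z.1 = f z.2)
        (confF n a) z).card ≤ (confF n a).card * a := by
    intro z hz
    simp only [Finset.mem_filter] at hz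
    rw [Finset.bipartiteAbove, card_collide_mul hz.2.1]
    exact Nat.mul_le_mul_left _ (Nat.sub_le _ _)
  refine (Finset.sum_le_sum h6).trans ?_
  have h7 : ((Finset.univ : Finset ((Fin n × Fin a) × (Fin n × Fin a))).filter
      (fun z => z.1 ≠ z.2 ∧ z.1.1 = z.2.1)).card ≤ n * a * a := by
    have : ((Finset.univ : Finset ((Fin n × Fin a) × (Fin n × Fin a))).filter
      (fun z => z.1 ≠ z.2 ∧ z.1.1 = z.2.1)).card ≤
        (Finset.univ : Finset ((Fin n × Fin a) × Fin a)).card := by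
      refine Finset.card_le_card_of_injOn (fun z => (z.1, z.2.2)) (by simp) ?_
      rintro ⟨⟨p, q⟩, ⟨r, t⟩⟩ h ⟨⟨p', q'⟩, ⟨r', t'⟩⟩ h' e
      simp at h h' e ⊢
      obtain ⟨⟨rfl, rfl⟩, rfl⟩ := e
      simp [← h.2, ← h'.2]
    simpa using this
  rw [Finset.sum_const, smul_eq_mul]
  calc _ ≤ (n * a * a) * ((confF n a).card * a) := Nat.mul_le_mul_right _ h7
    _ = _ := by ring

/-- Markov's inequality for the number of defects. -/
lemma half_few_defects {n a : ℕ} (h : 2 ≤ n * a) :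
    (confF n a).card ≤ 2 * ((confF n a).filter fun f => (defects f).card ≤ 4 * a ^ 2).card := by
  have h1 := sum_defects n a
  have h2 : ∑ f ∈ confF n a, (defects f).card ≤ (confF n a).card * (2 * a ^ 2) := by
    have h3 : n * a ≤ 2 * (n * a - 1) := by omega
    have h4 : 0 < n * a - 1 := by omega
    refine Nat.le_of_mul_le_mul_left (h1.trans ?_) h4
    calc (confF n a).card * (n * a * a * a) = (n * a) * ((confF n a).card * (a * a)) := by ring
      _ ≤ (2 * (n * a - 1)) * ((confF n a).card * (a * a)) := Nat.mul_le_mul_right _ h3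
      _ = _ := by ring
  have h5 : ((confF n a).filter fun f => ¬ (defects f).card ≤ 4 * a ^ 2).card * (4 * a ^ 2) ≤
      ∑ f ∈ confF n a, (defects f).card := by
    refine le_trans ?_ (Finset.sum_le_sum_of_subset (Finset.filter_subset
      (fun f => ¬ (defects f).card ≤ 4 * a ^ 2) _))
    rw [← smul_eq_mul]
    refine Finset.card_nsmul_le_sum _ _ _ ?_
    intro f hf
    simp only [Finset.mem_filter] at hf
    omega
  have h6 := Finset.card_filter_add_card_filter_not (s := confF n a)
    (fun f => (defects f).card ≤ 4 * a ^ 2)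
  have ha : 0 < 2 * a ^ 2 := by
    have : a ≠ 0 := by rintro rfl; omega
    positivity
  have h7 : 2 * ((confF n a).filter fun f => ¬ (defects f).card ≤ 4 * a ^ 2).card ≤
      (confF n a).card := by
    refine Nat.le_of_mul_le_mul_right ?_ ha
    calc _ = ((confF n a).filter fun f => ¬ (defects f).card ≤ 4 * a ^ 2).card * (4 * a ^ 2) := by
          ring
      _ ≤ _ := h5.trans h2
  omega

/-- A defect `(x, z)` is repaired, without creating another one, by switching the images of `x` and
of a half-edge `y` far away from it. -/
lemma exists_swap_lt {n a : ℕ} (hn : 2 * a ^ 2 < n * a) {f : Fin n × Fin a → Fin n}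
    (hf : f ∈ confF n a) (hd : (defects f).Nonempty) :
    ∃ x y, (defects (f ∘ Equiv.swap x y)).card < (defects f).card := by
  obtain ⟨⟨x, z⟩, hz⟩ := hd
  have hz' := hz
  simp only [defects, Finset.mem_filter, Finset.mem_univ, true_and] at hz'
  obtain ⟨hxz, hrow, hcol⟩ := hz'
  have hb1 : ((Finset.univ.filter fun u => f u = f x).biUnion
      fun u => Finset.univ.filter fun y : Fin n × Fin a => y.1 = u.1).card ≤ a * a := by
    refine (Finset.card_biUnion_le_card_mul _ _ a ?_).trans
      (Nat.mul_le_mul_right _ (mem_confF.1 hf (f x)).le)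
    intro u _
    have : (Finset.univ.filter fun y : Fin n × Fin a => y.1 = u.1) =
        ({u.1} : Finset (Fin n)) ×ˢ Finset.univ := by
      ext ⟨y, s⟩; simp [eq_comm]
    simp [this]
  have hb2 : ((Finset.univ : Finset (Fin a)).biUnion
      fun s => Finset.univ.filter fun y => f y = f (x.1, s)).card ≤ a * a := by
    refine (Finset.card_biUnion_le_card_mul _ _ a ?_).trans ?_
    · intro s _; exact (mem_confF.1 hf _).le
    · simp
  -- `y` must avoid the half-edges at left neighbours of `f x` and those whose image is already a
  -- neighbour of `x.1`: at most `2 a ^ 2 < n a` half-edges.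
  obtain ⟨y, hy⟩ : ∃ y, y ∉ ((Finset.univ.filter fun u => f u = f x).biUnion
      fun u => Finset.univ.filter fun y : Fin n × Fin a => y.1 = u.1) ∪
      ((Finset.univ : Finset (Fin a)).biUnion
      fun s => Finset.univ.filter fun y => f y = f (x.1, s)) := by
    by_contra! hcon
    have h1 := Finset.card_le_card (fun y _ => hcon y :
      (Finset.univ : Finset (Fin n × Fin a)) ⊆ _)
    have h2 := Finset.card_union_le ((Finset.univ.filter fun u => f u = f x).biUnion
      fun u => Finset.univ.filter fun y : Fin n × Fin a => y.1 = u.1)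
      ((Finset.univ : Finset (Fin a)).biUnion
      fun s => Finset.univ.filter fun y => f y = f (x.1, s))
    simp only [Finset.card_univ, Fintype.card_prod, Fintype.card_fin] at h1
    nlinarith
  simp only [Finset.mem_union, Finset.mem_biUnion, Finset.mem_filter, Finset.mem_univ, true_and,
    not_or, not_exists, not_and] at hy
  obtain ⟨hy1, hy2⟩ := hy
  have hyx : y.1 ≠ x.1 := fun h => hy1 x rfl h
  have hrow' : ∀ q : Fin n × Fin a, q.1 = x.1 → f y ≠ f q := by
    intro q hq
    have := hy2 q.2
    rwa [← hq] at this
  have hcol' : ∀ q : Fin n × Fin a, y.1 = q.1 → f q ≠ f x := fun q hq h => hy1 q h hq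
  refine ⟨x, y, Finset.card_lt_card (Finset.ssubset_iff_subset_ne.2 ⟨?_, ?_⟩)⟩
  · rintro ⟨p, q⟩ hpq
    simp only [defects, Finset.mem_filter, Finset.mem_univ, true_and, Function.comp] at hpq ⊢
    obtain ⟨h1, h2, h3⟩ := hpq
    refine ⟨h1, h2, ?_⟩
    simp only [Equiv.swap_apply_def] at h3
    grind
  · intro h
    rw [← h] at hz
    simp only [defects, Finset.mem_filter, Finset.mem_univ, true_and, Function.comp] at hz
    obtain ⟨h1, h2, h3⟩ := hz
    simp only [Equiv.swap_apply_def] at h3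
    grind

/-- Simple configurations are at least a polynomially small proportion of all configurations:
half of them have at most `4 a ^ 2` defects, and each of these becomes simple after at most that
many switchings, of which there are `(n a) ^ 2` each time. -/
lemma card_confF_le {n a : ℕ} (ha : 0 < a) (hn : 2 * a < n) :
    (confF n a).card ≤ 2 * ((n * a) ^ 2) ^ (4 * a ^ 2) * (confSimple n a).card := by
  have hn' : 2 * a ^ 2 < n * a := by nlinarith
  have key : ∀ X : ℕ, ((confF n a).filter fun f => (defects f).card ≤ X).card ≤
      ((n * a) ^ 2) ^ X * (confSimple n a).card := by
    intro X
    induction X with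
    | zero => simp [confSimple]
    | succ X ih =>
      have hsub : ((confF n a).filter fun f => (defects f).card ≤ X + 1) ⊆
          (((confF n a).filter fun f => (defects f).card ≤ X) ×ˢ
            (Finset.univ : Finset ((Fin n × Fin a) × (Fin n × Fin a)))).image
            (fun z => z.1 ∘ Equiv.swap z.2.1 z.2.2) := by
        intro f hf
        simp only [Finset.mem_filter] at hf
        obtain ⟨x, y, hxy⟩ : ∃ x y, (defects (f ∘ Equiv.swap x y)).card ≤ X := by
          rcases Finset.eq_empty_or_nonempty (defects f) with h0 | h0
          · have x : Fin n × Fin a := (⟨0, by omega⟩, ⟨0, ha⟩)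
            exact ⟨x, x, by simp [h0]⟩
          · obtain ⟨x, y, h⟩ := exists_swap_lt hn' hf.1 h0
            exact ⟨x, y, by omega⟩
        refine Finset.mem_image.2 ⟨(f ∘ Equiv.swap x y, (x, y)), ?_, ?_⟩
        · simp [hxy, confF_comp hf.1]
        · ext z; simp
      refine (Finset.card_le_card hsub).trans (Finset.card_image_le.trans ?_)
      rw [Finset.card_product]
      simp only [Finset.card_univ, Fintype.card_prod, Fintype.card_fin]
      calc _ ≤ ((n * a) ^ 2) ^ X * (confSimple n a).card * (n * a * (n * a)) :=
            Nat.mul_le_mul_right _ ih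
        _ = _ := by ring
  have h1 := half_few_defects (n := n) (a := a) (by nlinarith)
  have h2 := key (4 * a ^ 2)
  calc _ ≤ _ := h1
    _ ≤ 2 * (((n * a) ^ 2) ^ (4 * a ^ 2) * (confSimple n a).card) := Nat.mul_le_mul_left _ h2
    _ = _ := by ring

/-! ### Prescribed degrees in regular bipartite graphs -/

/-- The half-edges sent into `U`. -/
def hits {n a : ℕ} (U : Finset (Fin n)) (f : Fin n × Fin a → Fin n) : Finset (Fin n × Fin a) :=
  Finset.univ.filter fun x => f x ∈ U

lemma card_hits {n a : ℕ} (U : Finset (Fin n)) {f : Fin n × Fin a → Fin n} (hf : f ∈ confF n a) :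
    (hits U f).card = a * U.card := by
  rw [hits, Finset.card_eq_sum_card_fiberwise (f := f) (t := U) (by intro x; simp)]
  rw [Finset.sum_congr rfl (g := fun _ => a)]
  · simp [mul_comm]
  · intro w hw
    rw [Finset.filter_filter]
    refine Eq.trans ?_ (mem_confF.1 hf w)
    congr 1
    ext x; simp; rintro rfl; exact hw

/-- Permuting the half-edges shows that the number of configurations hitting `U` exactly from `H`
depends on `H` only through its cardinality. -/
lemma card_hits_eq_le {n a : ℕ} (U : Finset (Fin n)) {H H' : Finset (Fin n × Fin a)}
    (h : H.card = H'.card) :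
    ((confF n a).filter fun f => hits U f = H).card ≤
      ((confF n a).filter fun f => hits U f = H').card := by
  classical
  let e : {x // x ∈ H'} ≃ {x // x ∈ H} := Finset.equivOfCardEq h.symm
  let σ : Equiv.Perm (Fin n × Fin a) := e.extendSubtype
  have hσ : ∀ x, σ x ∈ H ↔ x ∈ H' := by
    intro x
    constructor
    · intro hx
      by_contra hx'
      exact e.extendSubtype_not_mem x hx' hx
    · intro hx
      exact e.extendSubtype_mem x hx
  refine Finset.card_le_card_of_injOn (fun f => f ∘ σ) ?_ ?_
  · intro f hf
    simp only [Finset.coe_filter, Set.mem_ofPred_eq] at hf ⊢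
    refine ⟨confF_comp hf.1 _, ?_⟩
    ext x
    rw [← hσ, ← hf.2]
    simp [hits]
  · intro f _ g _ hfg
    exact σ.surjective.injective_comp_right hfg

/-- The set of half-edges sent into `U` is uniform among the sets of size `a * U.card`. -/
lemma card_hits_eq_mul_le {n a : ℕ} (U : Finset (Fin n)) (H : Finset (Fin n × Fin a))
    (h : H.card = a * U.card) :
    ((confF n a).filter fun f => hits U f = H).card * (n * a).choose (a * U.card) ≤
      (confF n a).card := by
  have h1 : (confF n a).card = ∑ H' ∈ Finset.powersetCard (a * U.card) Finset.univ,
      ((confF n a).filter fun f => hits U f = H').card := by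
    refine Finset.card_eq_sum_card_fiberwise ?_
    intro f hf
    simpa using card_hits U hf
  rw [h1]
  have h2 : (Finset.powersetCard (a * U.card) (Finset.univ : Finset (Fin n × Fin a))).card =
      (n * a).choose (a * U.card) := by simp [Finset.card_powersetCard]
  rw [← h2, mul_comm, ← smul_eq_mul]
  refine Finset.card_nsmul_le_sum _ _ _ ?_
  intro H' hH'
  exact card_hits_eq_le U (h.trans (Finset.mem_powersetCard.1 hH').2.symm)

/-- In a uniform configuration the numbers of edges from the left vertices into `U` follow a
multivariate hypergeometric distribution. -/
lemma card_hits_pattern {n a : ℕ} (U : Finset (Fin n)) (r : Fin n → ℕ) :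
    ((confF n a).filter fun f => ∀ v, (Finset.univ.filter fun s => f (v, s) ∈ U).card = r v).card *
      (n * a).choose (a * U.card) ≤ (∏ v, a.choose (r v)) * (confF n a).card := by
  classical
  let T : Finset (Finset (Fin n × Fin a)) := Finset.univ.filter fun H =>
    H.card = a * U.card ∧ ∀ v, (Finset.univ.filter fun s => (v, s) ∈ H).card = r v
  have hT : T.card ≤ ∏ v, a.choose (r v) := by
    have : (Fintype.piFinset fun v => Finset.powersetCard (r v) (Finset.univ : Finset (Fin a))).card
        = ∏ v, a.choose (r v) := by simp
    rw [← this]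
    refine Finset.card_le_card_of_injOn (fun H v => Finset.univ.filter fun s => (v, s) ∈ H) ?_ ?_
    · intro H hH
      simp [T] at hH
      simp [Finset.mem_powersetCard, hH.2]
    · intro H _ H' _ h
      ext ⟨v, s⟩
      have := congrArg (fun g => s ∈ g v) h
      simpa using this
  have h1 : ((confF n a).filter fun f =>
      ∀ v, (Finset.univ.filter fun s => f (v, s) ∈ U).card = r v).card =
      ∑ H ∈ T, (((confF n a).filter fun f =>
      ∀ v, (Finset.univ.filter fun s => f (v, s) ∈ U).card = r v).filter
        fun f => hits U f = H).card := by
    refine Finset.card_eq_sum_card_fiberwise ?_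
    intro f hf
    simp only [Finset.coe_filter, Set.mem_ofPred_eq] at hf
    simp only [T, Finset.coe_filter, Set.mem_ofPred_eq, Finset.mem_univ, true_and]
    refine ⟨card_hits U hf.1, ?_⟩
    simpa [hits] using hf.2
  rw [h1, Finset.sum_mul]
  refine (Finset.sum_le_card_nsmul T _ (confF n a).card ?_).trans ?_
  · intro H hH
    simp only [T, Finset.mem_filter] at hH
    refine le_trans (Nat.mul_le_mul_right _ (Finset.card_le_card ?_))
      (card_hits_eq_mul_le U H hH.2.1)
    intro f hf
    simp only [Finset.mem_filter] at hf ⊢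
    exact ⟨hf.1.1, hf.2⟩
  · rw [smul_eq_mul]
    exact Nat.mul_le_mul_right _ hT

/-- The simple `a`-regular bipartite graphs between two copies of `Fin n`, recorded as the families of
neighbourhoods of the left vertices. -/
def breg (n a : ℕ) : Finset (Fin n → Finset (Fin n)) :=
  Finset.univ.filter fun B => (∀ v, (B v).card = a) ∧
    ∀ w, (Finset.univ.filter fun v => w ∈ B v).card = a

/-- The neighbourhoods described by a configuration. -/
def toB {n a : ℕ} (f : Fin n × Fin a → Fin n) : Fin n → Finset (Fin n) :=
  fun v => Finset.univ.image fun s => f (v, s)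

lemma mem_confSimple {n a : ℕ} {f : Fin n × Fin a → Fin n} :
    f ∈ confSimple n a ↔ f ∈ confF n a ∧ ∀ v, Function.Injective fun s => f (v, s) := by
  simp only [confSimple, Finset.mem_filter, Finset.card_eq_zero, defects,
    Finset.filter_eq_empty_iff, Finset.mem_univ, true_implies, and_congr_right_iff]
  intro _
  constructor
  · intro h v s t hst
    by_contra hne
    exact @h ((v, s), (v, t)) ⟨by simpa using hne, rfl, hst⟩
  · rintro h ⟨⟨v, s⟩, ⟨w, t⟩⟩ ⟨h1, h2, h3⟩
    simp only at h2
    subst h2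
    exact h1 (by rw [h v h3])

lemma toB_mem {n a : ℕ} {f : Fin n × Fin a → Fin n} (hf : f ∈ confSimple n a) :
    toB f ∈ breg n a := by
  obtain ⟨h1, h2⟩ := mem_confSimple.1 hf
  simp only [breg, Finset.mem_filter, Finset.mem_univ, true_and]
  refine ⟨fun v => by simp [toB, Finset.card_image_of_injective _ (h2 v)], fun w => ?_⟩
  refine Eq.trans ?_ (mem_confF.1 h1 w)
  symm
  refine Finset.card_bij (fun x _ => x.1) ?_ ?_ ?_
  · rintro ⟨v, s⟩ h
    simp only [Finset.mem_filter, Finset.mem_univ, true_and] at h ⊢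
    exact Finset.mem_image.2 ⟨s, by simp, h⟩
  · rintro ⟨v, s⟩ h ⟨v', s'⟩ h' e
    simp only [Finset.mem_filter, Finset.mem_univ, true_and] at h h' e
    subst e
    rw [h2 v (h.trans h'.symm : f (v, s) = f (v, s'))]
  · intro v h
    simp only [toB, Finset.mem_filter, Finset.mem_univ, true_and, Finset.mem_image] at h
    obtain ⟨s, hs⟩ := h
    exact ⟨(v, s), by simpa using hs, rfl⟩

/-- Every simple regular bipartite graph arises from `(a!) ^ n` configurations, one for each choice
of orderings of the neighbourhoods. -/
lemma card_toB_fiber {n a : ℕ} {B : Fin n → Finset (Fin n)} (hB : B ∈ breg n a) :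
    ((confSimple n a).filter fun f => toB f = B).card = (a.factorial) ^ n := by
  classical
  simp only [breg, Finset.mem_filter, Finset.mem_univ, true_and] at hB
  have h1 : Fintype.card (∀ v, Fin a ≃ B v) = a.factorial ^ n := by
    have : ∀ v, Fintype.card (Fin a ≃ B v) = a.factorial := by
      intro v
      rw [Fintype.card_equiv (Finset.equivFinOfCardEq (hB.1 v)).symm]
      simp
    simp [this]
  rw [← h1, ← Finset.card_univ]
  symm
  refine Finset.card_bij (fun g _ => fun x => (g x.1 x.2 : Fin n)) ?_ ?_ ?_
  · intro g _
    have htoB : toB (fun x : Fin n × Fin a => (g x.1 x.2 : Fin n)) = B := by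
      ext v w
      simp only [toB, Finset.mem_image, Finset.mem_univ, true_and]
      constructor
      · rintro ⟨s, rfl⟩; exact (g v s).2
      · intro hw; exact ⟨(g v).symm ⟨w, hw⟩, by simp⟩
    have hinj : ∀ v, Function.Injective fun s => (g v s : Fin n) :=
      fun v => Subtype.val_injective.comp (g v).injective
    simp only [Finset.mem_filter, mem_confSimple, mem_confF]
    refine ⟨⟨fun w => ?_, hinj⟩, htoB⟩
    refine Eq.trans ?_ (hB.2 w)
    refine Finset.card_bij (fun x _ => x.1) ?_ ?_ ?_
    · rintro ⟨v, s⟩ h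
      simp only [Finset.mem_filter, Finset.mem_univ, true_and] at h ⊢
      rw [← h]; exact (g v s).2
    · rintro ⟨v, s⟩ h ⟨v', s'⟩ h' e
      simp only [Finset.mem_filter, Finset.mem_univ, true_and] at h h' e
      subst e
      rw [hinj v (h.trans h'.symm)]
    · intro v h
      simp only [Finset.mem_filter, Finset.mem_univ, true_and] at h
      exact ⟨(v, (g v).symm ⟨w, h⟩), by simp, rfl⟩
  · intro g _ g' _ h
    funext v
    ext s
    exact congrArg Fin.val (congrFun h (v, s))
  · intro f hf
    simp only [Finset.mem_filter, mem_confSimple] at hf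
    obtain ⟨⟨_, hinj⟩, htoB⟩ := hf
    have hmem : ∀ v s, f (v, s) ∈ B v := by
      intro v s; rw [← htoB]; exact Finset.mem_image.2 ⟨s, by simp, rfl⟩
    refine ⟨fun v => Equiv.ofBijective (fun s => ⟨f (v, s), hmem v s⟩) ⟨?_, ?_⟩, by simp, ?_⟩
    · intro s t hst
      exact hinj v (congrArg Subtype.val hst)
    · rintro ⟨w, hw⟩
      rw [← htoB] at hw
      obtain ⟨s, -, hs⟩ := Finset.mem_image.1 hw
      exact ⟨s, Subtype.ext hs⟩
    · rfl

lemma card_breg_mul (n a : ℕ) : (breg n a).card * a.factorial ^ n = (confSimple n a).card := by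
  classical
  rw [Finset.card_eq_sum_card_fiberwise (f := toB) (s := confSimple n a) (t := breg n a)
    (fun f hf => toB_mem hf), Finset.sum_congr rfl (fun B hB => card_toB_fiber hB)]
  simp

lemma card_breg_pattern_mul {n a : ℕ} (U : Finset (Fin n)) (r : Fin n → ℕ) :
    ((breg n a).filter fun B => ∀ v, (B v ∩ U).card = r v).card * a.factorial ^ n ≤
    ((confF n a).filter fun f =>
      ∀ v, (Finset.univ.filter fun s => f (v, s) ∈ U).card = r v).card := by
  classical
  have h1 : ((confSimple n a).filter fun f => ∀ v, (toB f v ∩ U).card = r v).card =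
      ∑ B ∈ (breg n a).filter fun B => ∀ v, (B v ∩ U).card = r v,
      (((confSimple n a).filter fun f => ∀ v, (toB f v ∩ U).card = r v).filter
        fun f => toB f = B).card := by
    refine Finset.card_eq_sum_card_fiberwise ?_
    intro f hf
    simp only [Finset.coe_filter, Set.mem_ofPred_eq] at hf ⊢
    exact ⟨toB_mem hf.1, hf.2⟩
  rw [Finset.sum_congr rfl (g := fun _ => a.factorial ^ n)] at h1
  · rw [Finset.sum_const, smul_eq_mul] at h1
    rw [← h1]
    refine Finset.card_le_card ?_
    intro f hf
    simp only [Finset.mem_filter] at hf ⊢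
    obtain ⟨hf1, hf2⟩ := mem_confSimple.1 hf.1
    refine ⟨hf1, fun v => ?_⟩
    rw [← hf.2 v, ← Finset.card_image_of_injective _ (hf2 v)]
    congr 1
    ext w
    simp only [toB, Finset.mem_image, Finset.mem_filter, Finset.mem_univ, true_and,
      Finset.mem_inter]
    grind
  · intro B hB
    simp only [Finset.mem_filter] at hB
    rw [← card_toB_fiber hB.1]
    congr 1
    ext f
    simp only [Finset.mem_filter]
    constructor
    · rintro ⟨⟨h1, h2⟩, h3⟩; exact ⟨h1, h3⟩
    · rintro ⟨h1, rfl⟩; exact ⟨⟨h1, hB.2⟩, rfl⟩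

/-- Double counting of the edges into `U`. -/
lemma sum_breg_pattern {n a : ℕ} (U : Finset (Fin n)) (r : Fin n → ℕ) {B : Fin n → Finset (Fin n)}
    (hB : B ∈ breg n a) (h : ∀ v, (B v ∩ U).card = r v) :
    ∑ v, r v = a * U.card := by
  simp only [breg, Finset.mem_filter, Finset.mem_univ, true_and] at hB
  have h4 := Finset.sum_card_bipartiteAbove_eq_sum_card_bipartiteBelow
    (s := (Finset.univ : Finset (Fin n))) (t := U) (fun v w => w ∈ B v)
  simp only [Finset.bipartiteAbove, Finset.bipartiteBelow, hB.2] at h4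
  rw [Finset.sum_congr rfl fun v _ => (h v).symm]
  simp only [Finset.filter_mem_eq_inter] at h4
  simp only [Finset.inter_comm _ U, h4]
  simp [mul_comm]

/-- In a uniform simple `a`-regular bipartite graph a prescribed pattern of degrees into `U` is,
up to a factor polynomial in `n`, no likelier than in the hypergeometric model. -/
lemma card_breg_pattern {n a : ℕ} (ha : 0 < a) (hn : 2 * a < n) (U : Finset (Fin n))
    (r : Fin n → ℕ) :
    ((breg n a).filter fun B => ∀ v, (B v ∩ U).card = r v).card * (n * a).choose (a * U.card) ≤
      2 * ((n * a) ^ 2) ^ (4 * a ^ 2) * (∏ v, a.choose (r v)) * (breg n a).card := by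
  have h1 := card_breg_pattern_mul (a := a) U r
  have h2 := card_hits_pattern (a := a) U r
  have h3 := card_confF_le ha hn
  rw [← card_breg_mul] at h3
  have h4 : 0 < a.factorial ^ n := by positivity
  refine Nat.le_of_mul_le_mul_right ?_ h4
  calc _ = (((breg n a).filter fun B => ∀ v, (B v ∩ U).card = r v).card * a.factorial ^ n) *
        (n * a).choose (a * U.card) := by ring
    _ ≤ _ := Nat.mul_le_mul_right _ h1
    _ ≤ _ := h2
    _ ≤ (∏ v, a.choose (r v)) * _ := Nat.mul_le_mul_left _ h3
    _ = _ := by ring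

/-! ### Atoms of binomial distributions -/

/-- The binomial distribution with parameters `N` and `K / N` is maximal at its mean `K`. -/
lemma choose_mean_max (N K : ℕ) (hK : K ≤ N) (i : ℕ) :
    N.choose i * K ^ i * (N - K) ^ (N - i) ≤ N.choose K * K ^ K * (N - K) ^ (N - K) := by
  set t : ℕ → ℕ := fun i => N.choose i * K ^ i * (N - K) ^ (N - i) with ht
  have hstep : ∀ i, i < N → t (i + 1) * (i + 1) =
      (N.choose i * K ^ i * (N - K) ^ (N - (i + 1))) * ((N - i) * K) := by
    intro i hi
    have := Nat.choose_succ_right_eq N i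
    simp only [ht]
    calc _ = (N.choose (i + 1) * (i + 1)) * K ^ (i + 1) * (N - K) ^ (N - (i + 1)) := by ring
      _ = _ := by rw [this]; ring
  have hstep' : ∀ i, i < N → t i * (i + 1) =
      (N.choose i * K ^ i * (N - K) ^ (N - (i + 1))) * ((i + 1) * (N - K)) := by
    intro i hi
    have : N - i = (N - (i + 1)) + 1 := by omega
    simp only [ht]
    rw [this]; ring
  have hup : ∀ i, i < K → t i ≤ t (i + 1) := by
    intro i hi
    refine Nat.le_of_mul_le_mul_right ?_ (Nat.succ_pos i)
    rw [Nat.succ_eq_add_one, hstep i (by omega), hstep' i (by omega)]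
    refine Nat.mul_le_mul_left _ ?_
    calc (i + 1) * (N - K) ≤ K * (N - i) := Nat.mul_le_mul (by omega) (by omega)
      _ = _ := mul_comm _ _
  have hdown : ∀ i, K ≤ i → t (i + 1) ≤ t i := by
    intro i hi
    rcases lt_or_ge i N with h | h
    · refine Nat.le_of_mul_le_mul_right ?_ (Nat.succ_pos i)
      rw [Nat.succ_eq_add_one, hstep i (by omega), hstep' i (by omega)]
      refine Nat.mul_le_mul_left _ ?_
      calc (N - i) * K ≤ (N - K) * (i + 1) := Nat.mul_le_mul (by omega) (by omega)
        _ = _ := mul_comm _ _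
    · simp [ht, Nat.choose_eq_zero_of_lt (Nat.lt_succ_of_le h)]
  change t i ≤ t K
  rcases le_total i K with h | h
  · have : ∀ j, j ≤ K → t (K - j) ≤ t K := by
      intro j
      induction j with
      | zero => simp
      | succ j ih =>
        intro hj
        refine le_trans ?_ (ih (by omega))
        have := hup (K - (j + 1)) (by omega)
        rwa [show K - (j + 1) + 1 = K - j by omega] at this
    have := this (K - i) (by omega)
    rwa [show K - (K - i) = i by omega] at this
  · induction i, h using Nat.le_induction with
    | base => exact le_rfl
    | succ j hj ih => exact (hdown j hj).trans ih

/-- The binomial distribution with parameters `N` and `K / N` has mass at least `1 / (N + 1)` at `K`. -/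
lemma pow_le_choose_mean (N K : ℕ) (hK : K ≤ N) :
    N ^ N ≤ (N + 1) * (N.choose K * K ^ K * (N - K) ^ (N - K)) := by
  have h := add_pow K (N - K) N
  rw [show K + (N - K) = N by omega] at h
  rw [h]
  refine (Finset.sum_le_card_nsmul _ _ (N.choose K * K ^ K * (N - K) ^ (N - K)) ?_).trans ?_
  · intro i _
    refine le_trans (le_of_eq ?_) (choose_mean_max N K hK i)
    push_cast; ring
  · simp

/-- The mass of `r` under the binomial distribution with parameters `a` and `x`. -/
noncomputable def binMass (a : ℕ) (x : ℝ) (r : ℕ) : ℝ := a.choose r * x ^ r * (1 - x) ^ (a - r)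

lemma binMass_nonneg {a : ℕ} {x : ℝ} (h0 : 0 ≤ x) (h1 : x ≤ 1) (r : ℕ) : 0 ≤ binMass a x r := by
  have : 0 ≤ 1 - x := by linarith
  unfold binMass; positivity

lemma binMass_eq_zero {a r : ℕ} (h : a < r) (x : ℝ) : binMass a x r = 0 := by
  simp [binMass, Nat.choose_eq_zero_of_lt h]

lemma sum_binMass (a : ℕ) (x : ℝ) : ∑ r ∈ Finset.range (a + 1), binMass a x r = 1 := by
  have h := add_pow x (1 - x) a
  simp only [add_sub_cancel, one_pow] at h
  rw [h]
  exact Finset.sum_congr rfl fun r _ => by unfold binMass; ring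

lemma sum_binMass_le {a : ℕ} {x : ℝ} (h0 : 0 ≤ x) (h1 : x ≤ 1) (s : Finset ℕ) :
    ∑ r ∈ s, binMass a x r ≤ 1 := by
  rw [← sum_binMass a x, ← Finset.sum_filter_add_sum_filter_not s (fun r => r ≤ a)]
  have : ∑ r ∈ s with ¬ r ≤ a, binMass a x r = 0 := by
    refine Finset.sum_eq_zero fun r hr => binMass_eq_zero ?_ x
    simpa using (Finset.mem_filter.1 hr).2
  rw [this, add_zero]
  refine Finset.sum_le_sum_of_subset_of_nonneg ?_ fun r _ _ => binMass_nonneg h0 h1 r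
  intro r hr
  simp at hr ⊢
  omega

lemma binMass_symm {a r : ℕ} (h : r ≤ a) (x : ℝ) : binMass a x r = binMass a (1 - x) (a - r) := by
  unfold binMass
  rw [Nat.choose_symm h, sub_sub_cancel, Nat.sub_sub_self h]; ring

/-- The ratio of two consecutive binomial masses, without division. -/
lemma binMass_succ (a : ℕ) (x : ℝ) (r : ℕ) :
    binMass a x (r + 1) * ((r + 1) * (1 - x)) = binMass a x r * ((a - r) * x) := by
  rcases lt_or_ge r a with h | h
  · have h1 := Nat.choose_succ_right_eq a r
    have h2 : (a.choose (r + 1) : ℝ) * (r + 1) = a.choose r * (a - r) := by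
      rw [← Nat.cast_sub h.le]; exact_mod_cast h1
    unfold binMass
    rw [show a - r = (a - (r + 1)) + 1 by omega]
    calc _ = (a.choose (r + 1) * (r + 1) : ℝ) * x ^ (r + 1) * (1 - x) ^ (a - (r + 1) + 1) := by
          ring
      _ = _ := by rw [h2]; ring
  · rw [binMass_eq_zero (by omega), zero_mul]
    rcases h.eq_or_lt with rfl | h
    · simp
    · rw [binMass_eq_zero h, zero_mul]

lemma binMass_step {a r : ℕ} {x η : ℝ} (h0 : 0 < x) (h1 : x < 1)
    (h : η * ((r + 1) * (1 - x)) ≤ (a - r) * x) :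
    η * binMass a x r ≤ binMass a x (r + 1) := by
  have h2 := binMass_succ a x r
  have h3 : 0 < (r + 1 : ℝ) * (1 - x) := by
    have : 0 < 1 - x := by linarith
    positivity
  refine le_of_mul_le_mul_right ?_ h3
  rw [h2]
  have := mul_le_mul_of_nonneg_left h (binMass_nonneg h0.le h1.le r (a := a))
  linarith

/-- A binomial distribution with large variance has no large atom at or below its mean: the next
`L` masses are each at least half as large, and their sum is at most `1`. -/
lemma binMass_le_of_le {a r L : ℕ} {x : ℝ} (h0 : 0 < x) (h1 : x < 1) (hL : 0 < L)
    (hA : 4 * (L : ℝ) ^ 2 ≤ a * x) (hB : 4 * (L : ℝ) ^ 2 ≤ a * (1 - x)) (hr : (r : ℝ) ≤ a * x) :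
    binMass a x r ≤ 2 / L := by
  have hL' : (1 : ℝ) ≤ L := by exact_mod_cast hL
  -- With `a x` and `a (1 - x)` at least `4 L ^ 2`, consecutive masses have ratio at least
  -- `1 - 1 / (2 L)` over the next `L` steps.
  set η : ℝ := 1 - 2 * L / (4 * L ^ 2) with hη
  have hηeq : η = 1 - 1 / (2 * L) := by rw [hη]; field_simp; ring
  have hηpos : 0 ≤ η := by
    rw [hηeq, sub_nonneg, div_le_one (by positivity)]; linarith
  have ha : (0 : ℝ) < a := by
    by_contra hcon
    have : (a : ℝ) = 0 := le_antisymm (not_lt.1 hcon) (by positivity)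
    rw [this] at hA; nlinarith
  have hstep : ∀ s : ℕ, s < L → η * binMass a x (r + s) ≤ binMass a x (r + s + 1) := by
    intro s hs
    apply binMass_step h0 h1
    have hs' : (s : ℝ) + 1 ≤ L := by exact_mod_cast hs
    have e1 : a * (1 - x) * (1 - 1 / (4 * L)) ≤ a * (1 - x) - s := by
      have : (s : ℝ) ≤ a * (1 - x) * (1 / (4 * L)) := by
        rw [mul_one_div, le_div_iff₀ (by positivity)]; nlinarith
      linarith
    have e2 : a * x + s + 1 ≤ a * x * (1 + 1 / (4 * L)) := by
      have : (s : ℝ) + 1 ≤ a * x * (1 / (4 * L)) := by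
        rw [mul_one_div, le_div_iff₀ (by positivity)]; nlinarith
      linarith
    have e3 : η * (1 + 1 / (4 * L)) ≤ 1 - 1 / (4 * L) := by
      have : 0 ≤ (1 / (4 * L) : ℝ) := by positivity
      have e4 : η = 1 - 2 * (1 / (4 * L)) := by rw [hηeq]; ring
      rw [e4]; nlinarith
    push_cast
    have h1' : 0 ≤ 1 - x := by linarith
    calc η * ((r + s + 1) * (1 - x)) ≤ η * ((a * x * (1 + 1 / (4 * L))) * (1 - x)) :=
          mul_le_mul_of_nonneg_left (mul_le_mul_of_nonneg_right (by linarith) h1') hηpos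
      _ = (η * (1 + 1 / (4 * L))) * (a * (1 - x) * x) := by ring
      _ ≤ (1 - 1 / (4 * L)) * (a * (1 - x) * x) :=
          mul_le_mul_of_nonneg_right e3 (by positivity)
      _ = (a * (1 - x) * (1 - 1 / (4 * L))) * x := by ring
      _ ≤ (a * (1 - x) - s) * x := mul_le_mul_of_nonneg_right e1 h0.le
      _ ≤ (a - (r + s)) * x := mul_le_mul_of_nonneg_right (by linarith) h0.le
  have hpow : ∀ s : ℕ, s ≤ L → η ^ s * binMass a x r ≤ binMass a x (r + s) := by
    intro s
    induction s with
    | zero => simp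
    | succ s ih =>
      intro hs
      calc η ^ (s + 1) * binMass a x r = η * (η ^ s * binMass a x r) := by ring
        _ ≤ η * binMass a x (r + s) := mul_le_mul_of_nonneg_left (ih (by omega)) hηpos
        _ ≤ _ := hstep s (by omega)
  have hhalf : ∀ s ∈ Finset.range L, binMass a x r / 2 ≤ binMass a x (r + s) := by
    intro s hs
    have hs := (Finset.mem_range.1 hs).le
    refine le_trans ?_ (hpow s hs)
    have hb := one_add_mul_le_pow (a := -(1 / (2 * L : ℝ))) (by
      have : 1 / (2 * L : ℝ) ≤ 1 := by rw [div_le_one (by positivity)]; linarith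
      linarith) s
    have hs' : (s : ℝ) ≤ L := by exact_mod_cast hs
    have : (s : ℝ) * (1 / (2 * L)) ≤ 1 / 2 := by
      rw [mul_one_div, div_le_div_iff₀ (by positivity) (by positivity)]; linarith
    have h2 : 1 / 2 ≤ η ^ s := by
      rw [hηeq, sub_eq_add_neg]; linarith
    have := mul_le_mul_of_nonneg_right h2 (binMass_nonneg h0.le h1.le r (a := a))
    linarith
  have hsum := Finset.card_nsmul_le_sum (Finset.range L) _ _ hhalf
  have hsum2 : ∑ s ∈ Finset.range L, binMass a x (r + s) ≤ 1 := by
    have := sum_binMass_le h0.le h1.le ((Finset.range L).map (addLeftEmbedding r)) (a := a)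
    simpa using this
  rw [Finset.card_range, nsmul_eq_mul] at hsum
  rw [le_div_iff₀ (by positivity)]
  nlinarith

lemma binMass_le {a L : ℕ} {x : ℝ} (h0 : 0 < x) (h1 : x < 1) (hL : 0 < L)
    (hA : 4 * (L : ℝ) ^ 2 ≤ a * x) (hB : 4 * (L : ℝ) ^ 2 ≤ a * (1 - x)) (r : ℕ) :
    binMass a x r ≤ 2 / L := by
  rcases lt_or_ge a r with h | h
  · rw [binMass_eq_zero h]; positivity
  rcases le_total (r : ℝ) (a * x) with hr | hr
  · exact binMass_le_of_le h0 h1 hL hA hB hr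
  · rw [binMass_symm h]
    refine binMass_le_of_le (by linarith) (by linarith) hL hB (by simpa using hA) ?_
    rw [Nat.cast_sub h]; linarith

/-- If both means `a x` and `a (1 - x)` are at least `1 / 2`, the neighbour of an atom in the direction
of the mean is at least a third as large. -/
lemma binMass_le_three_quarters {a : ℕ} {x : ℝ} (h0 : 0 < x) (h1 : x < 1)
    (hA : 1 / 2 ≤ a * x) (hB : 1 / 2 ≤ a * (1 - x)) (r : ℕ) :
    binMass a x r ≤ 3 / 4 := by
  have key : ∀ {y : ℝ} {r : ℕ}, 0 < y → y < 1 → 1 / 2 ≤ a * y → 1 / 2 ≤ a * (1 - y) →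
      (r : ℝ) ≤ a * y → binMass a y r ≤ 3 / 4 := by
    intro y r h0 h1 hA hB hr
    have h2 : (1 / 3 : ℝ) * binMass a y r ≤ binMass a y (r + 1) := by
      apply binMass_step h0 h1
      have e1 : (1 / 3 : ℝ) * ((r + 1) * (1 - y)) ≤ a * y * (1 - y) := by
        have : 0 ≤ 1 - y := by linarith
        nlinarith
      nlinarith
    have h3 := sum_binMass_le h0.le h1.le {r, r + 1} (a := a)
    rw [Finset.sum_pair (by omega)] at h3
    linarith
  rcases lt_or_ge a r with h | h
  · rw [binMass_eq_zero h]; norm_num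
  rcases le_total (r : ℝ) (a * x) with hr | hr
  · exact key h0 h1 hA hB hr
  · rw [binMass_symm h]
    refine key (by linarith) (by linarith) hB (by simpa using hA) ?_
    rw [Nat.cast_sub h]; linarith

lemma binMass_le_pow {a : ℕ} {x : ℝ} (h0 : 0 ≤ x) (h1 : x ≤ 1) (r : ℕ) :
    binMass a x r ≤ (a * x) ^ r := by
  have h2 : (1 - x) ^ (a - r) ≤ 1 := pow_le_one₀ (by linarith) (by linarith)
  have h3 : (a.choose r : ℝ) ≤ a ^ r := by exact_mod_cast Nat.choose_le_pow a r
  rw [mul_pow]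
  calc binMass a x r ≤ a.choose r * x ^ r * 1 := by unfold binMass; gcongr
    _ ≤ _ := by rw [mul_one]; gcongr

/-- A hypergeometric pattern probability is at most a polynomial factor times the product of the
corresponding binomial masses. -/
lemma prod_choose_le {n a u : ℕ} (hn : 0 < n) (ha : 0 < a) (hu : u ≤ n) (r : Fin n → ℕ)
    (hr : ∑ v, r v = a * u) :
    (∏ v, (a.choose (r v) : ℝ)) ≤
      (n * a + 1) * (∏ v, binMass a (u / n) (r v)) * (n * a).choose (a * u) := by
  by_cases hra : ∀ v, r v ≤ a
  swap
  · push Not at hra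
    obtain ⟨v, hv⟩ := hra
    rw [Finset.prod_eq_zero (Finset.mem_univ v), Finset.prod_eq_zero (Finset.mem_univ v)]
    · simp
    · exact binMass_eq_zero hv _
    · simp [Nat.choose_eq_zero_of_lt hv]
  have hK : a * u ≤ n * a := by rw [mul_comm n]; exact Nat.mul_le_mul_left _ hu
  have h1 := pow_le_choose_mean (n * a) (a * u) hK
  set x : ℝ := u / n with hx
  have hn' : (0 : ℝ) < n := by exact_mod_cast hn
  have ha' : (0 : ℝ) < a := by exact_mod_cast ha
  have h2 : (1 : ℝ) ≤ (n * a + 1) * ((n * a).choose (a * u) * x ^ (a * u) *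
      (1 - x) ^ (n * a - a * u)) := by
    have h3 : ((n * a : ℕ) : ℝ) ^ (n * a) ≤ ((n * a : ℕ) + 1) * ((n * a).choose (a * u) *
        ((a * u : ℕ) : ℝ) ^ (a * u) * ((n * a - a * u : ℕ) : ℝ) ^ (n * a - a * u)) := by
      exact_mod_cast h1
    have e1 : ((a * u : ℕ) : ℝ) = (n * a : ℕ) * x := by
      rw [hx]; push_cast; field_simp
    have e2 : ((n * a - a * u : ℕ) : ℝ) = (n * a : ℕ) * (1 - x) := by
      rw [Nat.cast_sub hK, e1]; ring
    rw [e1, e2, mul_pow, mul_pow] at h3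
    have hN : (0 : ℝ) < ((n * a : ℕ) : ℝ) ^ (n * a) := by
      have : 0 < n * a := Nat.mul_pos hn ha
      positivity
    refine le_of_mul_le_mul_right ?_ hN
    rw [one_mul]
    refine h3.trans (le_of_eq ?_)
    have e3 : ((n * a : ℕ) : ℝ) ^ (n * a) =
        ((n * a : ℕ) : ℝ) ^ (a * u) * ((n * a : ℕ) : ℝ) ^ (n * a - a * u) := by
      rw [← pow_add]; congr 1; omega
    rw [e3]; push_cast; ring
  -- The exponents of `x` and `1 - x` add up to `a u` and `n a - a u`.
  have h4 : (∏ v, (a.choose (r v) : ℝ)) * (x ^ (a * u) * (1 - x) ^ (n * a - a * u)) =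
      ∏ v, binMass a x (r v) := by
    unfold binMass
    rw [Finset.prod_mul_distrib, Finset.prod_mul_distrib, Finset.prod_pow_eq_pow_sum,
      Finset.prod_pow_eq_pow_sum, hr]
    have : ∑ v, (a - r v) = n * a - a * u := by
      rw [Finset.sum_tsub_distrib _ fun v _ => hra v, hr]; simp
    rw [this]; ring
  have h5 : (0 : ℝ) ≤ ∏ v, (a.choose (r v) : ℝ) := by positivity
  calc (∏ v, (a.choose (r v) : ℝ)) ≤ (∏ v, (a.choose (r v) : ℝ)) * _ :=
        le_mul_of_one_le_right h5 h2
    _ = (n * a + 1) * ((∏ v, (a.choose (r v) : ℝ)) * (x ^ (a * u) * (1 - x) ^ (n * a - a * u))) *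
        (n * a).choose (a * u) := by ring
    _ = _ := by rw [h4]

/-! ### Counting partitions near a given one -/

/-- Generating function of the number of disagreements with a fixed function. -/
lemma sum_pow_dist {m k : ℕ} (f : Fin m → Fin k) (x : ℝ) :
    ∑ q : Fin m → Fin k, x ^ (Finset.univ.filter fun v => q v ≠ f v).card =
      (1 + (k - 1) * x) ^ m := by
  have h1 : ∀ q : Fin m → Fin k, x ^ (Finset.univ.filter fun v => q v ≠ f v).card =
      ∏ v, (if q v ≠ f v then x else 1) := by
    intro q
    rw [Finset.prod_ite]; simp
  rw [Finset.sum_congr rfl fun q _ => h1 q,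
    ← Fintype.piFinset_univ, ← Finset.prod_univ_sum (f := fun v c => if c ≠ f v then x else 1)]
  have h2 : ∀ v : Fin m, ∑ c : Fin k, (if c ≠ f v then x else 1) = 1 + (k - 1) * x := by
    intro v
    rw [← Finset.add_sum_erase _ _ (Finset.mem_univ (f v))]
    rw [Finset.sum_congr rfl (g := fun _ => x) (by
      intro c hc; rw [if_pos (Finset.ne_of_mem_erase hc)])]
    have : 1 ≤ k := (f v).pos
    simp [Nat.cast_sub this]
  rw [Finset.prod_congr rfl fun v _ => h2 v]
  simp

/-- A Hamming ball of radius `k * u` in `k ^ (k * n)` has at most `(3 k n / u) ^ (k u)` points. -/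
lemma card_hamming {k n u : ℕ} (hu : 0 < u) (hun : u ≤ n) (f : Fin (k * n) → Fin k) :
    ((Finset.univ.filter fun q : Fin (k * n) → Fin k =>
      (Finset.univ.filter fun v => q v ≠ f v).card ≤ k * u).card : ℝ) ≤
      (3 * k * n / u) ^ (k * u) := by
  rcases Nat.eq_zero_or_pos k with rfl | hk
  · simp only [zero_mul, pow_zero]
    have : ((Finset.univ.filter fun q : Fin (0 * n) → Fin 0 =>
      (Finset.univ.filter fun v => q v ≠ f v).card ≤ 0).card) ≤ 1 := by
      refine (Finset.card_le_univ _).trans ?_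
      rw [Fintype.card_fun]; simp
    exact_mod_cast this
  have hn : 0 < n := by omega
  have hk' : (1 : ℝ) ≤ k := by exact_mod_cast hk
  -- Chernoff-type bound: the generating function is evaluated at `x = u / (k n)`.
  set x : ℝ := u / (k * n) with hx
  have hx0 : 0 < x := by positivity
  have hx1 : x ≤ 1 := by
    rw [hx, div_le_one (by positivity)]
    have : (u : ℝ) ≤ n := by exact_mod_cast hun
    nlinarith [(Nat.cast_nonneg n : (0 : ℝ) ≤ n)]
  set S := Finset.univ.filter fun q : Fin (k * n) → Fin k =>
      (Finset.univ.filter fun v => q v ≠ f v).card ≤ k * u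
  have h1 : (S.card : ℝ) * x ^ (k * u) ≤ (1 + (k - 1) * x) ^ (k * n) := by
    rw [← sum_pow_dist f x, ← nsmul_eq_mul, ← Finset.sum_const]
    refine (Finset.sum_le_sum fun q hq => ?_).trans
      (Finset.sum_le_sum_of_subset_of_nonneg (Finset.subset_univ S) fun _ _ _ => by positivity)
    exact pow_le_pow_of_le_one hx0.le hx1 (Finset.mem_filter.1 hq).2
  have h2 : (1 + (k - 1) * x) ^ (k * n) ≤ (3 : ℝ) ^ (k * u) := by
    calc (1 + (k - 1) * x) ^ (k * n) ≤ (Real.exp (k * x)) ^ (k * n) := by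
          refine pow_le_pow_left₀ (by nlinarith) ?_ _
          have := Real.add_one_le_exp (k * x)
          nlinarith
      _ = (Real.exp 1) ^ (k * u) := by
          rw [← Real.exp_nat_mul, ← Real.exp_nat_mul]
          congr 1
          rw [hx]; push_cast; field_simp
      _ ≤ 3 ^ (k * u) := by
          refine pow_le_pow_left₀ (Real.exp_pos 1).le ?_ _
          have := Real.exp_one_lt_d9; linarith
  have h3 : (3 * k * n / u : ℝ) ^ (k * u) = 3 ^ (k * u) / x ^ (k * u) := by
    rw [← div_pow]; congr 1; rw [hx]; field_simp
  rw [h3, le_div_iff₀ (by positivity)]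
  exact h1.trans h2

/-! ### Entropy against probability -/

/-- The conditions on the size of the entry `a` under which the entropy of choosing a partition is
beaten by the cost of a prescribed degree sequence. -/
lemma exists_large_entry (k : ℕ) (hk : 2 ≤ k) (K : ℝ) :
    ∃ M : ℕ, ∀ a : ℕ, M ≤ a → k ≤ a ∧ k * K ≤ a ∧ (6 * k * a : ℝ) ^ k / 2 ^ a ≤ 1 / 2 ∧
      k * K * Real.log (6 * k * a) ≤ a * Real.log (7 / 6) := by
  have hk0 : (0 : ℝ) < k := by exact_mod_cast (by omega : 0 < k)
  have e1 : ∀ᶠ a : ℕ in atTop, (6 * k * a : ℝ) ^ k / 2 ^ a ≤ 1 / 2 := by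
    have h := (tendsto_pow_const_div_const_pow_of_one_lt k (one_lt_two : (1 : ℝ) < 2)).const_mul
      ((6 * k : ℝ) ^ k)
    rw [mul_zero] at h
    filter_upwards [h.eventually_le_const (by norm_num : (0 : ℝ) < 1 / 2)] with a ha
    rw [mul_pow]; rw [mul_div_assoc]; exact ha
  have e2 : ∀ᶠ a : ℕ in atTop, k * K * Real.log (6 * k * a) ≤ a * Real.log (7 / 6) := by
    have hlog : 0 < Real.log (7 / 6) := Real.log_pos (by norm_num)
    have h := Real.isLittleO_log_id_atTop.def
      (c := Real.log (7 / 6) / (6 * k * (k * |K| + 1))) (by positivity)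
    have ht : Tendsto (fun a : ℕ => (6 * k * a : ℝ)) atTop atTop :=
      tendsto_natCast_atTop_atTop.const_mul_atTop (by positivity)
    filter_upwards [ht.eventually h, ht.eventually_ge_atTop 1] with a ha h1
    simp only [id, Real.norm_eq_abs] at ha
    rw [abs_of_nonneg (Real.log_nonneg h1), abs_of_nonneg (by linarith : (0 : ℝ) ≤ 6 * k * a), div_mul_eq_mul_div,
      le_div_iff₀ (by positivity)] at ha
    have h3 : (k * |K| + 1) * Real.log (6 * k * a) ≤ a * Real.log (7 / 6) := by
      have h6 : (0 : ℝ) < 6 * k := by positivity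
      refine le_of_mul_le_mul_left ?_ h6
      linarith
    have h4 : k * K ≤ k * |K| + 1 := by nlinarith [le_abs_self K]
    exact (mul_le_mul_of_nonneg_right h4 (Real.log_nonneg h1)).trans h3
  have e3 : ∀ᶠ a : ℕ in atTop, (k * K : ℝ) ≤ a := tendsto_natCast_atTop_atTop.eventually_ge_atTop _
  obtain ⟨M, hM⟩ := eventually_atTop.1 (e1.and (e2.and (e3.and (eventually_ge_atTop k))))
  exact ⟨M, fun a ha => ⟨(hM a ha).2.2.2, (hM a ha).2.2.1, (hM a ha).1, (hM a ha).2.1⟩⟩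

/-- If `a x ≤ 1 / 2`, each of the `a u` edges into the exceptional set costs a factor `a x`. The
resulting `(a x) ^ (a u)` beats the entropy `(3 k / x) ^ (k u)`, because `a` is large compared
with `k`. -/
lemma entropy_sparse {k n a u : ℕ} {x : ℝ} (hx0 : 0 < x) (hka : k ≤ a)
    (hx : a * x ≤ 1 / 2) (hbig : (6 * k * a : ℝ) ^ k / 2 ^ a ≤ 1 / 2) (hx1 : x ≤ 1)
    (r : Fin n → ℕ) (hr : ∑ v, r v = a * u) :
    (3 * k / x) ^ (k * u) * ∏ v, binMass a x (r v) ≤ (1 / 2) ^ u := by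
  have h1 : ∏ v, binMass a x (r v) ≤ (a * x) ^ (a * u) := by
    rw [← hr, ← Finset.prod_pow_eq_pow_sum]
    exact Finset.prod_le_prod (fun v _ => binMass_nonneg hx0.le hx1 _)
      fun v _ => binMass_le_pow hx0.le hx1 _
  refine (mul_le_mul_of_nonneg_left h1 (by positivity)).trans ?_
  rw [pow_mul, pow_mul, ← mul_pow]
  refine pow_le_pow_left₀ (by positivity) (le_trans ?_ hbig) _
  obtain ⟨b, rfl⟩ := Nat.exists_eq_add_of_le hka
  rw [pow_add _ k b, ← mul_assoc, ← mul_pow]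
  have e : 3 * k / x * ((k + b : ℕ) * x) = 3 * k * (k + b : ℕ) := by field_simp
  rw [e]
  have h2 : (((k + b : ℕ) : ℝ) * x) ^ b ≤ (1 / 2) ^ b := pow_le_pow_left₀ (by positivity) hx b
  refine (mul_le_mul_of_nonneg_left h2 (by positivity)).trans (le_of_eq ?_)
  have e6 : (6 * k * (k + b : ℕ) : ℝ) = 2 * (3 * k * (k + b : ℕ)) := by ring
  rw [e6, mul_pow 2, pow_add 2 k b, one_div, inv_pow]
  field_simp

/-- For `a x` bounded, the partition entropy is at most `(7 / 6) ^ n` because `x = O(1 / a)`. -/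
lemma entropy_middle {k n a u : ℕ} {x K : ℝ} (hx0 : 0 < x) (hk : 0 < k) (ha : 0 < a)
    (hun : (u : ℝ) = x * n) (hx : 1 / 2 ≤ a * x) (hxK : a * x ≤ K)
    (hlog : k * K * Real.log (6 * k * a) ≤ a * Real.log (7 / 6)) :
    (3 * k / x) ^ (k * u) ≤ (7 / 6 : ℝ) ^ n := by
  have hk' : (1 : ℝ) ≤ k := by exact_mod_cast hk
  have ha' : (1 : ℝ) ≤ a := by exact_mod_cast ha
  have h1 : 3 * k / x ≤ 6 * k * a := by
    rw [div_le_iff₀ hx0]; nlinarith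
  refine (pow_le_pow_left₀ (by positivity) h1 _).trans ?_
  have h6 : (1 : ℝ) ≤ 6 * k * a := by nlinarith
  rw [← Real.log_le_log_iff (by positivity) (by positivity), Real.log_pow, Real.log_pow]
  have hl := Real.log_nonneg h6
  push_cast
  rw [hun]
  have h2 : a * (k * (x * n) * Real.log (6 * k * a)) ≤ a * (n * Real.log (7 / 6)) := by
    calc a * (k * (x * n) * Real.log (6 * k * a))
        = (k * n * Real.log (6 * k * a)) * (a * x) := by ring
      _ ≤ (k * n * Real.log (6 * k * a)) * K := mul_le_mul_of_nonneg_left hxK (by positivity)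
      _ = n * (k * K * Real.log (6 * k * a)) := by ring
      _ ≤ n * (a * Real.log (7 / 6)) := mul_le_mul_of_nonneg_left hlog (by positivity)
      _ = _ := by ring
  exact le_of_mul_le_mul_left h2 (by linarith)

/-- For arbitrary `x`, the partition entropy is at most exponential in `n`, with a base depending only
on `k`. -/
lemma entropy_dense {k n u : ℕ} {x : ℝ} (hx0 : 0 < x) (hk : 0 < k) (hun' : u ≤ n)
    (hun : (u : ℝ) = x * n) :
    (3 * k / x) ^ (k * u) ≤ ((9 * k : ℝ) ^ k) ^ n := by
  have hk' : (1 : ℝ) ≤ k := by exact_mod_cast hk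
  have h1 : (1 / x) ^ u ≤ (3 : ℝ) ^ n := by
    calc (1 / x) ^ u ≤ Real.exp (1 / x) ^ u := by
          refine pow_le_pow_left₀ (by positivity) ?_ _
          have := Real.add_one_le_exp (1 / x); linarith
      _ = Real.exp 1 ^ n := by
          rw [← Real.exp_nat_mul, ← Real.exp_nat_mul, hun]; congr 1; field_simp
      _ ≤ 3 ^ n := by
          refine pow_le_pow_left₀ (Real.exp_pos 1).le ?_ _
          have := Real.exp_one_lt_d9; linarith
  have h2 : (3 * k : ℝ) ^ u ≤ (3 * k) ^ n := pow_le_pow_right₀ (by linarith) hun'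
  calc (3 * k / x) ^ (k * u) = ((3 * k : ℝ) ^ u * (1 / x) ^ u) ^ k := by
        rw [← mul_pow, ← pow_mul, mul_comm u k, mul_one_div]
    _ ≤ ((3 * k : ℝ) ^ n * 3 ^ n) ^ k := by gcongr
    _ = _ := by rw [← mul_pow, ← pow_mul, ← pow_mul, mul_comm n k]; congr 1; ring

/-- The number of partitions close to a recolouring of the planted one, multiplied by the number of
ways to realise a prescribed degree sequence, is exponentially smaller than the number of all
choices of `a u` half-edges. Here `u` is the number of exceptional vertices in a cluster, and it
must be linear in `n` and at most `(1 - 1 / k) n`. -/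
lemma entropy_le (k : ℕ) (hk : 2 ≤ k) : ∃ M : ℕ, ∀ a : ℕ, M ≤ a → ∀ ρ : ℝ, 0 < ρ →
    ∃ θ : ℝ, 0 < θ ∧ θ < 1 ∧ ∀ n u : ℕ, 0 < n → u ≤ n → ρ * n ≤ u → k * u + n ≤ k * n →
      ∀ r : Fin n → ℕ, ∑ v, r v = a * u →
        (3 * k * n / u : ℝ) ^ (k * u) * ∏ v, (a.choose (r v) : ℝ) ≤
          (n * a + 1) * θ ^ n * (n * a).choose (a * u) := by
  -- `2 / L` beats the entropy base `(9 k) ^ k` of `entropy_dense` by a factor `2`, and `K` is the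
  -- variance that `binMass_le` needs for this `L`.
  set L : ℕ := 4 * (9 * k) ^ k with hL
  set K : ℝ := 4 * (L : ℝ) ^ 2 with hK
  have hLpos : 0 < L := by positivity
  have hL1 : (1 : ℝ) ≤ L := by exact_mod_cast hLpos
  have hK1 : 1 ≤ K := by rw [hK]; nlinarith
  obtain ⟨M, hM⟩ := exists_large_entry k hk K
  refine ⟨M, fun a ha ρ hρ => ?_⟩
  obtain ⟨hka, hkK, hbig, hlog⟩ := hM a ha
  have hk0 : 0 < k := by omega
  have hkr : (0 : ℝ) < k := by exact_mod_cast hk0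
  have ha0 : 0 < a := by omega
  have ha' : (0 : ℝ) < a := by exact_mod_cast ha0
  refine ⟨max (7 / 8) ((1 / 2) ^ ρ), by positivity, max_lt (by norm_num)
    (Real.rpow_lt_one (by norm_num) (by norm_num) hρ), ?_⟩
  intro n u hn hun hρu hkun r hr
  have hn' : (0 : ℝ) < n := by exact_mod_cast hn
  set θ : ℝ := max (7 / 8) ((1 / 2) ^ ρ)
  set x : ℝ := u / n with hx
  have hu : (0 : ℝ) < u := lt_of_lt_of_le (by positivity) hρu
  have hx0 : 0 < x := by positivity
  have hux : (u : ℝ) = x * n := by rw [hx]; field_simp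
  have hkx : k * x + 1 ≤ k := by
    have h : (k * u + n : ℝ) ≤ k * n := by exact_mod_cast hkun
    rw [hux] at h
    refine le_of_mul_le_mul_right ?_ hn'
    linarith
  have hx1 : x < 1 := by
    refine lt_of_mul_lt_mul_left ?_ hkr.le
    linarith
  have hP : (3 * k * n / u : ℝ) = 3 * k / x := by rw [hx]; field_simp
  have hax : K ≤ a * (1 - x) := by
    refine le_of_mul_le_mul_left (hkK.trans ?_) hkr
    nlinarith
  have hprod : ∀ c : ℝ, (∀ v, binMass a x (r v) ≤ c) → ∏ v, binMass a x (r v) ≤ c ^ n := by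
    intro c hc
    refine (Finset.prod_le_prod (fun v _ => binMass_nonneg hx0.le hx1.le _)
      fun v _ => hc v).trans (le_of_eq (by simp))
  have hprod0 : 0 ≤ ∏ v, binMass a x (r v) :=
    Finset.prod_nonneg fun v _ => binMass_nonneg hx0.le hx1.le _
  have h78 : (7 / 8 : ℝ) ^ n ≤ θ ^ n := pow_le_pow_left₀ (by norm_num) (le_max_left _ _) n
  -- Three regimes: `a x ≤ 1 / 2`, `1 / 2 ≤ a x ≤ K` and `K ≤ a x`.
  have key : (3 * k / x) ^ (k * u) * ∏ v, binMass a x (r v) ≤ θ ^ n := by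
    rcases le_total (a * x) (1 / 2) with h | h
    · refine (entropy_sparse hx0 hka h hbig hx1.le r hr).trans ?_
      calc (1 / 2 : ℝ) ^ u = (1 / 2 : ℝ) ^ (u : ℝ) := (Real.rpow_natCast _ _).symm
        _ ≤ (1 / 2 : ℝ) ^ (ρ * n) :=
          Real.rpow_le_rpow_of_exponent_ge (by norm_num) (by norm_num) hρu
        _ = ((1 / 2 : ℝ) ^ ρ) ^ n := by rw [Real.rpow_mul (by norm_num), Real.rpow_natCast]
        _ ≤ θ ^ n := pow_le_pow_left₀ (by positivity) (le_max_right _ _) n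
    · refine le_trans ?_ h78
      rcases le_total (a * x) K with hK' | hK'
      · refine (mul_le_mul (entropy_middle hx0 hk0 ha0 hux h hK' hlog) (hprod (3 / 4) fun v =>
          binMass_le_three_quarters hx0 hx1 h (by linarith) _) hprod0 (by positivity)).trans
          (le_of_eq ?_)
        rw [← mul_pow]; norm_num
      · refine (mul_le_mul (entropy_dense hx0 hk0 hun hux) (hprod (2 / L) fun v =>
          binMass_le hx0 hx1 hLpos hK' hax _) hprod0 (by positivity)).trans ?_
        rw [← mul_pow]
        refine pow_le_pow_left₀ (by positivity) ?_ n
        rw [hL]; push_cast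
        rw [show (9 * k : ℝ) ^ k * (2 / (4 * (9 * k) ^ k)) = 1 / 2 by field_simp; norm_num]
        norm_num
  rw [hP]
  calc (3 * k / x) ^ (k * u) * ∏ v, (a.choose (r v) : ℝ)
      ≤ (3 * k / x) ^ (k * u) *
        ((n * a + 1) * (∏ v, binMass a x (r v)) * (n * a).choose (a * u)) :=
        mul_le_mul_of_nonneg_left (prod_choose_le hn ha0 hun r hr) (by positivity)
    _ = (n * a + 1) * ((3 * k / x) ^ (k * u) * ∏ v, binMass a x (r v)) *
        (n * a).choose (a * u) := by ring
    _ ≤ _ := by gcongr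

/-! ### Resampling one bipartite subgraph -/

open Classical in
/-- The bipartite subgraph of `G` between the enumerated vertex sets `x` and `y`, recorded as the
family of neighbourhoods of the vertices `x s`. -/
noncomputable def bip {V : Type} {n : ℕ} (x y : Fin n → V) (G : SimpleGraph V) (s : Fin n) : Finset (Fin n) :=
  Finset.univ.filter fun t => G.Adj (x s) (y t)

/-- `G` with the bipartite subgraph between the images of `x` and `y` replaced by `B`. -/
def replaceBip {V : Type} {n : ℕ} (x y : Fin n → V) (G : SimpleGraph V) (B : Fin n → Finset (Fin n)) :
    SimpleGraph V where
  Adj v w := v ≠ w ∧ ((G.Adj v w ∧ ∀ s t, ¬ (v = x s ∧ w = y t) ∧ ¬ (v = y t ∧ w = x s)) ∨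
    ∃ s t, t ∈ B s ∧ (v = x s ∧ w = y t ∨ v = y t ∧ w = x s))
  symm := ⟨by
    rintro v w ⟨hne, h⟩
    refine ⟨hne.symm, h.imp (fun h => ⟨h.1.symm, fun s t => ?_⟩) ?_⟩
    · have := h.2 s t; tauto
    · rintro ⟨s, t, hB, h⟩; exact ⟨s, t, hB, by tauto⟩⟩
  loopless := ⟨fun v h => h.1 rfl⟩

lemma mem_bip {V : Type} {n : ℕ} {x y : Fin n → V} {G : SimpleGraph V} {s t : Fin n} :
    t ∈ bip x y G s ↔ G.Adj (x s) (y t) := by simp [bip]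

lemma replaceBip_adj_cross {V : Type} {n : ℕ} {x y : Fin n → V} (hx : x.Injective)
    (hy : y.Injective) (hxy : ∀ s t, x s ≠ y t) (G : SimpleGraph V) (B : Fin n → Finset (Fin n))
    (s t : Fin n) : (replaceBip x y G B).Adj (x s) (y t) ↔ t ∈ B s := by
  constructor
  · rintro ⟨-, h | ⟨s', t', hB, h | h⟩⟩
    · exact absurd ⟨rfl, rfl⟩ (h.2 s t).1
    · rw [hx h.1, hy h.2]; exact hB
    · exact absurd h.1 (hxy _ _)
  · intro h
    exact ⟨hxy s t, Or.inr ⟨s, t, h, Or.inl ⟨rfl, rfl⟩⟩⟩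

lemma replaceBip_adj_of_not_cross {V : Type} {n : ℕ} {x y : Fin n → V} (G : SimpleGraph V)
    (B : Fin n → Finset (Fin n)) {v w : V}
    (h : ∀ s t, ¬ (v = x s ∧ w = y t) ∧ ¬ (v = y t ∧ w = x s)) :
    (replaceBip x y G B).Adj v w ↔ G.Adj v w := by
  constructor
  · rintro ⟨-, h' | ⟨s, t, -, h'⟩⟩
    · exact h'.1
    · have := h s t; tauto
  · intro h'
    exact ⟨h'.ne, Or.inl ⟨h', h⟩⟩

lemma bip_replaceBip {V : Type} {n : ℕ} {x y : Fin n → V} (hx : x.Injective)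
    (hy : y.Injective) (hxy : ∀ s t, x s ≠ y t) (G : SimpleGraph V)
    (B : Fin n → Finset (Fin n)) : bip x y (replaceBip x y G B) = B := by
  ext s t
  rw [mem_bip, replaceBip_adj_cross hx hy hxy]

lemma replaceBip_replaceBip {V : Type} {n : ℕ} {x y : Fin n → V} (hx : x.Injective)
    (hy : y.Injective) (hxy : ∀ s t, x s ≠ y t) (G : SimpleGraph V)
    (B : Fin n → Finset (Fin n)) : replaceBip x y (replaceBip x y G B) (bip x y G) = G := by
  ext v w
  by_cases h : ∀ s t, ¬ (v = x s ∧ w = y t) ∧ ¬ (v = y t ∧ w = x s)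
  · rw [replaceBip_adj_of_not_cross _ _ h, replaceBip_adj_of_not_cross _ _ h]
  · push Not at h
    obtain ⟨s, t, h⟩ := h
    by_cases h1 : v = x s ∧ w = y t
    · rw [h1.1, h1.2, replaceBip_adj_cross hx hy hxy, mem_bip]
    · obtain ⟨h2, h3⟩ := h (fun e1 e2 => h1 ⟨e1, e2⟩)
      rw [h2, h3, SimpleGraph.adj_comm, replaceBip_adj_cross hx hy hxy, mem_bip,
        SimpleGraph.adj_comm]

/-- Degrees into subsets of the range of `y`, read off from `bip`. -/
lemma degIn_image {V : Type} {n : ℕ} {x y : Fin n → V} (hy : y.Injective) (G : SimpleGraph V)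
    (U : Finset (Fin n)) (s : Fin n) :
    degIn G (x s) (y '' (U : Set (Fin n))) = (bip x y G s ∩ U).card := by
  have : y '' (U : Set (Fin n)) ∩ G.neighborSet (x s) =
      y '' ((bip x y G s ∩ U : Finset (Fin n)) : Set (Fin n)) := by
    ext w
    simp only [Set.mem_inter_iff, Set.mem_image, Finset.mem_coe, Finset.mem_inter, mem_bip,
      SimpleGraph.mem_neighborSet]
    constructor
    · rintro ⟨⟨t, ht, rfl⟩, h⟩; exact ⟨t, ⟨h, ht⟩, rfl⟩
    · rintro ⟨t, ⟨h, ht⟩, rfl⟩; exact ⟨⟨t, ht, rfl⟩, h⟩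
  rw [degIn, this, Set.ncard_image_of_injective _ hy, Set.ncard_coe_finset]

lemma degIn_range_left {V : Type} {n : ℕ} {x y : Fin n → V} (hx : x.Injective)
    (G : SimpleGraph V) (t : Fin n) :
    degIn G (y t) (Set.range x) = (Finset.univ.filter fun s => t ∈ bip x y G s).card := by
  have : Set.range x ∩ G.neighborSet (y t) =
      x '' ((Finset.univ.filter fun s => t ∈ bip x y G s : Finset (Fin n)) : Set (Fin n)) := by
    ext w
    simp only [Set.mem_inter_iff, Set.mem_image, Finset.mem_coe, Finset.mem_filter,
      Finset.mem_univ, true_and, mem_bip, SimpleGraph.mem_neighborSet, Set.mem_range]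
    constructor
    · rintro ⟨⟨s, rfl⟩, h⟩; exact ⟨s, h.symm, rfl⟩
    · rintro ⟨s, h, rfl⟩; exact ⟨⟨s, rfl⟩, h.symm⟩
  rw [degIn, this, Set.ncard_image_of_injective _ hx, Set.ncard_coe_finset]

lemma degIn_range {V : Type} {n : ℕ} {x y : Fin n → V} (hy : y.Injective)
    (G : SimpleGraph V) (s : Fin n) :
    degIn G (x s) (Set.range y) = (bip x y G s).card := by
  have := degIn_image (x := x) hy G Finset.univ s
  simpa using this

lemma degIn_congr {V : Type} {G H : SimpleGraph V} {v : V} {S : Set V}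
    (h : ∀ w ∈ S, G.Adj v w ↔ H.Adj v w) : degIn G v S = degIn H v S := by
  unfold degIn
  congr 1
  ext w
  simp only [Set.mem_inter_iff, SimpleGraph.mem_neighborSet]
  exact ⟨fun hw => ⟨hw.1, (h w hw.1).1 hw.2⟩, fun hw => ⟨hw.1, (h w hw.1).2 hw.2⟩⟩

lemma degIn_union {V : Type} [Finite V] (G : SimpleGraph V) (v : V) {S T : Set V}
    (h : Disjoint S T) : degIn G v (S ∪ T) = degIn G v S + degIn G v T := by
  unfold degIn
  rw [Set.union_inter_distrib_right, Set.ncard_union_eq]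
  exact h.mono Set.inter_subset_left Set.inter_subset_left

/-- Replacing one bipartite subgraph by another one with the same degrees keeps compatibility. -/
lemma Compat.resample {k n : ℕ} {a : Fin k → Fin k → ℕ} (hsymm : ∀ i j, a i j = a j i)
    {p : Fin (k * n) → Fin k} {l j : Fin k} (hlj : l ≠ j) {x y : Fin n → Fin (k * n)}
    (hx : x.Injective) (hy : y.Injective) (hxr : Set.range x = p ⁻¹' {l})
    (hyr : Set.range y = p ⁻¹' {j}) {G : SimpleGraph (Fin (k * n))} (hG : Compat k n a p G)
    {B : Fin n → Finset (Fin n)} (hB : B ∈ breg n (a l j)) :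
    Compat k n a p (replaceBip x y G B) := by
  have hpx : ∀ s, p (x s) = l := fun s => by
    have : x s ∈ p ⁻¹' {l} := hxr ▸ Set.mem_range_self s
    exact this
  have hpy : ∀ s, p (y s) = j := fun s => by
    have : y s ∈ p ⁻¹' {j} := hyr ▸ Set.mem_range_self s
    exact this
  have hxy : ∀ s t, x s ≠ y t := fun s t h => hlj (by rw [← hpx s, h, hpy])
  simp only [breg, Finset.mem_filter, Finset.mem_univ, true_and] at hB
  intro v i
  by_cases h1 : p v = l ∧ i = j
  · obtain ⟨h1, rfl⟩ := h1
    obtain ⟨s, rfl⟩ : v ∈ Set.range x := hxr ▸ h1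
    rw [← hyr, degIn_range hy, bip_replaceBip hx hy hxy, h1]
    exact hB.1 s
  by_cases h2 : p v = j ∧ i = l
  · obtain ⟨h2, rfl⟩ := h2
    obtain ⟨t, rfl⟩ : v ∈ Set.range y := hyr ▸ h2
    rw [← hxr, degIn_range_left hx, bip_replaceBip hx hy hxy, h2, hsymm]
    exact hB.2 t
  rw [← hG v i]
  refine degIn_congr fun w hw => replaceBip_adj_of_not_cross _ _ fun s t => ⟨?_, ?_⟩
  · rintro ⟨rfl, rfl⟩; exact h1 ⟨hpx s, by rw [← hpy t]; exact hw.symm⟩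
  · rintro ⟨rfl, rfl⟩; exact h2 ⟨hpy t, by rw [← hpx s]; exact hw.symm⟩

lemma Compat.bip_mem {k n : ℕ} {a : Fin k → Fin k → ℕ} (hsymm : ∀ i j, a i j = a j i)
    {p : Fin (k * n) → Fin k} {l j : Fin k} {x y : Fin n → Fin (k * n)}
    (hx : x.Injective) (hy : y.Injective) (hxr : Set.range x = p ⁻¹' {l})
    (hyr : Set.range y = p ⁻¹' {j}) {G : SimpleGraph (Fin (k * n))} (hG : Compat k n a p G) :
    bip x y G ∈ breg n (a l j) := by
  simp only [breg, Finset.mem_filter, Finset.mem_univ, true_and]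
  constructor
  · intro s
    have hs : p (x s) = l := by
      have : x s ∈ p ⁻¹' {l} := hxr ▸ Set.mem_range_self s
      exact this
    rw [← degIn_range hy, hyr, hG, hs]
  · intro t
    have ht : p (y t) = j := by
      have : y t ∈ p ⁻¹' {j} := hyr ▸ Set.mem_range_self t
      exact this
    rw [← degIn_range_left hx, hxr, hG, ht, hsymm]

/-- The number of neighbours that `x s` must have among the vertices of the cluster `j` not coloured
`c` by `q`, if both partitions `p` and `q` are compatible with `G`. It depends only on the edges
of `G` outside the bipartite subgraph between the clusters `l` and `j` of `p`. -/
noncomputable def forced {k n : ℕ} (a : Fin k → Fin k → ℕ) (p q : Fin (k * n) → Fin k)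
    (l j c : Fin k) (x : Fin n → Fin (k * n)) (G : SimpleGraph (Fin (k * n))) (s : Fin n) : ℕ :=
  a l j - (a (q (x s)) c - degIn G (x s) (q ⁻¹' {c} \ p ⁻¹' {j}))

/-- The constraints of `q` on the vertex `x s` determine its degree into `U`; the natural-number
subtractions in `forced` do not truncate here. -/
lemma card_bip_inter_eq_forced {k n : ℕ} {a : Fin k → Fin k → ℕ}
    {p q : Fin (k * n) → Fin k} {l j : Fin k} (c : Fin k) {x y : Fin n → Fin (k * n)}
    (hy : y.Injective) (hxr : Set.range x = p ⁻¹' {l})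
    (hyr : Set.range y = p ⁻¹' {j}) {G : SimpleGraph (Fin (k * n))} (hG : Compat k n a p G)
    (hq : Compat k n a q G) {U : Finset (Fin n)} (hU : ∀ t, t ∈ U ↔ q (y t) ≠ c) (s : Fin n) :
    (bip x y G s ∩ U).card = forced a p q l j c x G s := by
  have hs : p (x s) = l := by
    have : x s ∈ p ⁻¹' {l} := hxr ▸ Set.mem_range_self s
    exact this
  have e1 := hq (x s) c
  have e2 : q ⁻¹' {c} = (q ⁻¹' {c} \ p ⁻¹' {j}) ∪ y '' ((Uᶜ : Finset (Fin n)) : Set (Fin n)) := by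
    ext w
    simp only [Set.mem_union, Set.mem_sdiff, Set.mem_image, Finset.mem_coe, Finset.mem_compl, hU,
      not_not]
    constructor
    · intro hw
      by_cases h : w ∈ p ⁻¹' {j}
      · rw [← hyr] at h
        obtain ⟨t, rfl⟩ := h
        exact Or.inr ⟨t, hw, rfl⟩
      · exact Or.inl ⟨hw, h⟩
    · rintro (h | ⟨t, ht, rfl⟩)
      · exact h.1
      · exact ht
  have e3 : Disjoint (q ⁻¹' {c} \ p ⁻¹' {j}) (y '' ((Uᶜ : Finset (Fin n)) : Set (Fin n))) := by
    refine Set.disjoint_left.2 fun w hw hw' => hw.2 ?_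
    rw [← hyr]
    exact Set.image_subset_range _ _ hw'
  rw [e2, degIn_union _ _ e3, degIn_image hy] at e1
  have e4 := hG (x s) j
  rw [← hyr, degIn_range hy, hs] at e4
  have e5 := Finset.card_inter_add_card_sdiff (bip x y G s) U
  rw [Finset.sdiff_eq_inter_compl] at e5
  rw [forced]
  omega

lemma forced_replaceBip {k n : ℕ} {a : Fin k → Fin k → ℕ}
    {p q : Fin (k * n) → Fin k} {l j : Fin k} (hlj : l ≠ j) (c : Fin k) {x y : Fin n → Fin (k * n)}
    (hxr : Set.range x = p ⁻¹' {l})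
    (hyr : Set.range y = p ⁻¹' {j}) (G : SimpleGraph (Fin (k * n))) (B : Fin n → Finset (Fin n)) :
    forced a p q l j c x (replaceBip x y G B) = forced a p q l j c x G := by
  ext s
  unfold forced
  congr 2
  refine degIn_congr fun w hw => replaceBip_adj_of_not_cross _ _ fun s' t => ⟨?_, ?_⟩
  · rintro ⟨-, rfl⟩
    exact hw.2 (hyr ▸ Set.mem_range_self t)
  · rintro ⟨h, -⟩
    have h1 : x s ∈ p ⁻¹' {l} := hxr ▸ Set.mem_range_self s
    have h2 : y t ∈ p ⁻¹' {j} := hyr ▸ Set.mem_range_self t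
    rw [← h] at h2
    exact hlj (h1.symm.trans h2)

open Classical in
/-- The graphs compatible with `p`. -/
noncomputable def compatF (k n : ℕ) (a : Fin k → Fin k → ℕ) (p : Fin (k * n) → Fin k) :
    Finset (SimpleGraph (Fin (k * n))) :=
  Finset.univ.filter fun G => Compat k n a p G

open Classical in
/-- Resampling one bipartite subgraph: a bound, uniform over all prescriptions, for the
proportion of regular bipartite graphs with prescribed degrees into `U` is a bound for the
proportion of graphs compatible with `p` that are also compatible with `q`. -/
lemma card_compat_inter_le {k n : ℕ} {a : Fin k → Fin k → ℕ} (hsymm : ∀ i j, a i j = a j i)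
    {p q : Fin (k * n) → Fin k} {l j : Fin k} (hlj : l ≠ j) (c : Fin k) {x y : Fin n → Fin (k * n)}
    (hx : x.Injective) (hy : y.Injective) (hxr : Set.range x = p ⁻¹' {l})
    (hyr : Set.range y = p ⁻¹' {j}) {U : Finset (Fin n)} (hU : ∀ t, t ∈ U ↔ q (y t) ≠ c)
    (β : ℝ) (hβ : ∀ r : Fin n → ℕ, (((breg n (a l j)).filter fun B => ∀ v,
      (B v ∩ U).card = r v).card : ℝ) ≤ β * (breg n (a l j)).card) :
    ((compatF k n a p ∩ compatF k n a q).card : ℝ) ≤ β * (compatF k n a p).card := by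
  rcases (compatF k n a p ∩ compatF k n a q).eq_empty_or_nonempty with h0 | ⟨G0, h0⟩
  · rw [h0, Finset.card_empty, Nat.cast_zero]
    rcases Nat.eq_zero_or_pos (breg n (a l j)).card with hb | hb
    · rcases (compatF k n a p).eq_empty_or_nonempty with h1 | ⟨G1, h1⟩
      · simp [h1]
      · have := Compat.bip_mem hsymm hx hy hxr hyr (Finset.mem_filter.1 h1).2
        exact absurd (Finset.card_pos.2 ⟨_, this⟩) (by omega)
    · have h2 := (Nat.cast_nonneg _).trans (hβ fun _ => 0)
      have h3 : 0 ≤ β := nonneg_of_mul_nonneg_left h2 (by exact_mod_cast hb)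
      positivity
  have hpx : ∀ s, p (x s) = l := fun s => by
    have : x s ∈ p ⁻¹' {l} := hxr ▸ Set.mem_range_self s
    exact this
  have hpy : ∀ s, p (y s) = j := fun s => by
    have : y s ∈ p ⁻¹' {j} := hyr ▸ Set.mem_range_self s
    exact this
  have hxy : ∀ s t, x s ≠ y t := fun s t h => hlj (by rw [← hpx s, h, hpy])
  simp only [compatF, Finset.mem_inter, Finset.mem_filter, Finset.mem_univ, true_and] at h0
  have hb : 0 < (breg n (a l j)).card :=
    Finset.card_pos.2 ⟨_, Compat.bip_mem hsymm hx hy hxr hyr h0.1⟩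
  -- The map `(G, B) ↦ (replaceBip x y G B, bip x y G)` exchanges the bipartite subgraph of `G` with
  -- `B`; it is an involution, and the pattern forced by `q` survives the exchange.
  have hcount : (compatF k n a p ∩ compatF k n a q).card * (breg n (a l j)).card ≤
      ∑ G ∈ compatF k n a p, ((breg n (a l j)).filter fun B => ∀ v,
        (B v ∩ U).card = forced a p q l j c x G v).card := by
    rw [← Finset.card_product, ← Finset.card_sigma]
    refine Finset.card_le_card_of_injOn
      (fun z => (⟨replaceBip x y z.1 z.2, bip x y z.1⟩ :
        (_ : SimpleGraph (Fin (k * n))) × (Fin n → Finset (Fin n)))) ?_ ?_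
    · rintro ⟨G, B⟩ hz
      simp only [compatF, Finset.coe_product, Set.mem_prod, Finset.mem_coe, Finset.mem_inter,
        Finset.mem_filter, Finset.mem_univ, true_and] at hz
      obtain ⟨⟨hp, hq⟩, hB⟩ := hz
      simp only [compatF, Finset.mem_coe, Finset.mem_sigma, Finset.mem_filter, Finset.mem_univ,
        true_and]
      refine ⟨hp.resample hsymm hlj hx hy hxr hyr hB, hp.bip_mem hsymm hx hy hxr hyr, fun v => ?_⟩
      rw [forced_replaceBip hlj c hxr hyr]
      exact card_bip_inter_eq_forced c hy hxr hyr hp hq hU v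
    · rintro ⟨G, B⟩ - ⟨G', B'⟩ - h
      simp only [Sigma.mk.injEq, heq_eq_eq] at h
      have h1 := replaceBip_replaceBip hx hy hxy G B
      have h2 := bip_replaceBip hx hy hxy G B
      rw [h.1] at h1 h2
      rw [h.2, replaceBip_replaceBip hx hy hxy] at h1
      rw [bip_replaceBip hx hy hxy] at h2
      rw [h1, h2]
  have hb' : (0 : ℝ) < (breg n (a l j)).card := by exact_mod_cast hb
  refine le_of_mul_le_mul_right ?_ hb'
  calc ((compatF k n a p ∩ compatF k n a q).card : ℝ) * (breg n (a l j)).card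
      ≤ ∑ G ∈ compatF k n a p, (((breg n (a l j)).filter fun B => ∀ v,
        (B v ∩ U).card = forced a p q l j c x G v).card : ℝ) := by exact_mod_cast hcount
    _ ≤ ∑ G ∈ compatF k n a p, β * (breg n (a l j)).card := Finset.sum_le_sum fun G _ => hβ _
    _ = _ := by rw [Finset.sum_const, nsmul_eq_mul]; ring

/-! ### The union bound -/

/-- The vertices of the `i`-th cluster of `p` whose `q`-colour differs from `c`. -/
def miscoloured {k m : ℕ} (p q : Fin m → Fin k) (i c : Fin k) : Finset (Fin m) :=
  Finset.univ.filter fun v => p v = i ∧ q v ≠ c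

/-- The partitions `q` for which every cluster `i` of `p` has at most `u` vertices of colour
other than `c i`, with equality for the cluster `j`. -/
def nearby {k m : ℕ} (p : Fin m → Fin k) (c : Fin k → Fin k) (j : Fin k) (u : ℕ) :
    Finset (Fin m → Fin k) :=
  Finset.univ.filter fun q => (∀ i, (miscoloured p q i (c i)).card ≤ u) ∧
    (miscoloured p q j (c j)).card = u

lemma card_nearby {k n u : ℕ} (hu : 0 < u) (hun : u ≤ n) (p : Fin (k * n) → Fin k)
    (c : Fin k → Fin k) (j : Fin k) :
    ((nearby p c j u).card : ℝ) ≤ (3 * k * n / u) ^ (k * u) := by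
  refine le_trans ?_ (card_hamming hu hun (c ∘ p))
  refine Nat.cast_le.2 (Finset.card_le_card fun q hq => ?_)
  simp only [nearby, Finset.mem_filter, Finset.mem_univ, true_and] at hq ⊢
  rw [Finset.card_eq_sum_card_fiberwise (f := p) (t := Finset.univ) (fun _ _ => by simp)]
  calc ∑ i, ((Finset.univ.filter fun v => q v ≠ (c ∘ p) v).filter fun v => p v = i).card
      ≤ ∑ i : Fin k, u := by
        refine Finset.sum_le_sum fun i _ => le_trans (Finset.card_le_card ?_) (hq.1 i)
        intro v hv
        simp only [miscoloured, Finset.mem_filter, Finset.mem_univ, true_and,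
          Function.comp] at hv ⊢
        exact ⟨hv.2, hv.2 ▸ hv.1⟩
    _ = k * u := by simp

lemma card_cluster {k n : ℕ} {p : Fin (k * n) → Fin k} (hp : IsEquiPartition k n p)
    (i : Fin k) : (Finset.univ.filter fun v => p v = i).card = n := by
  refine Eq.trans ?_ (hp i)
  rw [← Set.ncard_coe_finset]; congr 1; ext; simp

lemma exists_enumeration {k n : ℕ} {p : Fin (k * n) → Fin k} (hp : IsEquiPartition k n p)
    (i : Fin k) : ∃ x : Fin n → Fin (k * n), x.Injective ∧ Set.range x = p ⁻¹' {i} := by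
  have h := card_cluster hp i
  refine ⟨_, (Finset.orderEmbOfFin _ h).injective, ?_⟩
  rw [Finset.range_orderEmbOfFin]
  ext; simp

/-- If the colour `i` occupies a proportion `β` of the cluster `l`, then `q` lies in `nearby p c j u`,
where `c` is the majority colour on each cluster. The majority colour covers at least `n / k`
vertices of a cluster, and in the cluster `l` it misses a proportion `β` or `1 - β`. -/
lemma exists_nearby {k n : ℕ} {p : Fin (k * n) → Fin k} (hp : IsEquiPartition k n p)
    (q : Fin (k * n) → Fin k) (l i : Fin k) {β : ℝ}
    (h : ((p ⁻¹' {l} ∩ q ⁻¹' {i}).ncard : ℝ) = β * n) :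
    ∃ (c : Fin k → Fin k) (j : Fin k) (u : ℕ), q ∈ nearby p c j u ∧ u ≤ n ∧
      min β (1 - β) * n ≤ u ∧ k * u + n ≤ k * n := by
  set N : Fin k → Fin k → ℕ := fun i c => (Finset.univ.filter fun v => p v = i ∧ q v = c).card
    with hN
  have hcl := card_cluster hp
  have hsum : ∀ i, ∑ c, N i c = n := by
    intro i
    rw [← hcl i, Finset.card_eq_sum_card_fiberwise (f := q) (t := Finset.univ)
      (fun _ _ => by simp)]
    simp only [hN, Finset.filter_filter]
  have hadd : ∀ i c, N i c + (miscoloured p q i c).card = n := by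
    intro i c
    have := Finset.card_filter_add_card_filter_not (s := Finset.univ.filter fun v => p v = i)
      (fun v => q v = c)
    rw [Finset.filter_filter, Finset.filter_filter, hcl i] at this
    exact this
  have hmax : ∀ i, ∃ c, ∀ c', N i c' ≤ N i c := fun i => by
    obtain ⟨c, -, hc⟩ := Finset.exists_max_image Finset.univ (N i) ⟨l, Finset.mem_univ _⟩
    exact ⟨c, fun c' => hc c' (Finset.mem_univ _)⟩
  choose c hc using hmax
  obtain ⟨j, -, hj⟩ := Finset.exists_max_image Finset.univ
    (fun i => (miscoloured p q i (c i)).card) ⟨l, Finset.mem_univ _⟩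
  refine ⟨c, j, (miscoloured p q j (c j)).card, ?_, ?_, ?_, ?_⟩
  · simp only [nearby, Finset.mem_filter, Finset.mem_univ, true_and, and_true]
    exact fun i => hj i (Finset.mem_univ _)
  · have := hadd j (c j); omega
  · have h1 : (((miscoloured p q l (c l)).card : ℕ) : ℝ) ≤ (miscoloured p q j (c j)).card := by
      exact_mod_cast hj l (Finset.mem_univ _)
    refine le_trans ?_ h1
    have hNl : (N l i : ℝ) = β * n := by
      rw [← h]; simp only [hN]; rw [← Set.ncard_coe_finset]; congr 2; ext; simp
    have h2 : (N l (c l) : ℝ) + (miscoloured p q l (c l)).card = n := by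
      exact_mod_cast hadd l (c l)
    have hn0 : (0 : ℝ) ≤ n := Nat.cast_nonneg n
    by_cases hci : c l = i
    · rw [hci] at h2 ⊢
      have := mul_le_mul_of_nonneg_right (min_le_right β (1 - β)) hn0
      linarith
    · have h3 : N l i ≤ (miscoloured p q l (c l)).card := by
        refine Finset.card_le_card fun v hv => ?_
        simp only [miscoloured, Finset.mem_filter, Finset.mem_univ, true_and] at hv ⊢
        exact ⟨hv.1, by rw [hv.2]; exact Ne.symm hci⟩
      have h3' : (N l i : ℝ) ≤ (miscoloured p q l (c l)).card := by exact_mod_cast h3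
      have := mul_le_mul_of_nonneg_right (min_le_left β (1 - β)) hn0
      linarith
  · have h1 : n ≤ k * N j (c j) := by
      calc n = ∑ c', N j c' := (hsum j).symm
        _ ≤ ∑ _c' : Fin k, N j (c j) := Finset.sum_le_sum fun c' _ => hc j c'
        _ = _ := by simp
    have h2 := congrArg (k * ·) (hadd j (c j))
    simp only [mul_add] at h2
    omega

open Classical in
/-- The union bound over the partitions `q` attached to fixed `c`, `j`, `u`: the number of such `q` is
cancelled by the probability that one of them is compatible with the graph. -/
lemma sum_nearby_le {k n u b : ℕ} {a : Fin k → Fin k → ℕ} (hsymm : ∀ i j, a i j = a j i)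
    {p : Fin (k * n) → Fin k} (hp : IsEquiPartition k n p) {l j : Fin k} (hlj : l ≠ j)
    (hb : a l j = b) (hb0 : 0 < b) (hn : 2 * b < n) (hu : 0 < u) (hun : u ≤ n) {θ : ℝ}
    (hθ : 0 ≤ θ)
    (hent : ∀ r : Fin n → ℕ, ∑ v, r v = b * u →
        (3 * k * n / u : ℝ) ^ (k * u) * ∏ v, (b.choose (r v) : ℝ) ≤
          (n * b + 1) * θ ^ n * (n * b).choose (b * u)) (c : Fin k → Fin k) :
    ∑ q ∈ nearby p c j u, ((compatF k n a p ∩ compatF k n a q).card : ℝ) ≤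
      2 * ((n * b : ℝ) ^ 2) ^ (4 * b ^ 2) * ((n * b + 1) * θ ^ n) * (compatF k n a p).card := by
  obtain ⟨x, hx, hxr⟩ := exists_enumeration hp l
  obtain ⟨y, hy, hyr⟩ := exists_enumeration hp j
  set P : ℝ := (3 * k * n / u : ℝ) ^ (k * u) with hP
  have hk : (0 : ℝ) < k := by exact_mod_cast l.pos
  have hn0 : (0 : ℝ) < n := by exact_mod_cast (by omega : 0 < n)
  have hu0 : (0 : ℝ) < u := by exact_mod_cast hu
  have hP0 : 0 < P := by positivity
  set Q : ℝ := 2 * ((n * b : ℝ) ^ 2) ^ (4 * b ^ 2) with hQ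
  have hQ0 : 0 ≤ Q := by positivity
  have hone : ∀ q ∈ nearby p c j u, ((compatF k n a p ∩ compatF k n a q).card : ℝ) ≤
      Q * ((n * b + 1) * θ ^ n) / P * (compatF k n a p).card := by
    intro q hq
    simp only [nearby, Finset.mem_filter, Finset.mem_univ, true_and] at hq
    set U : Finset (Fin n) := Finset.univ.filter fun t => q (y t) ≠ c j with hU
    have hUc : U.card = u := by
      rw [← hq.2, ← Finset.card_image_of_injective U hy]
      congr 1
      ext w
      simp only [hU, miscoloured, Finset.mem_image, Finset.mem_filter, Finset.mem_univ, true_and]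
      have hw : p w = j ↔ w ∈ Set.range y := by rw [hyr]; rfl
      rw [hw]
      constructor
      · rintro ⟨t, ht, rfl⟩; exact ⟨⟨t, rfl⟩, ht⟩
      · rintro ⟨⟨t, rfl⟩, ht⟩; exact ⟨t, ht, rfl⟩
    refine card_compat_inter_le hsymm hlj (c j) hx hy hxr hyr (q := q) (U := U) (fun t => by simp [hU]) _
      fun r => ?_
    rw [hb]
    rcases ((breg n b).filter fun B => ∀ v, (B v ∩ U).card = r v).eq_empty_or_nonempty with
      h0 | ⟨B, hB⟩
    · rw [h0]; simp only [Finset.card_empty, Nat.cast_zero]; positivity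
    have hr := sum_breg_pattern U r (Finset.mem_filter.1 hB).1 (Finset.mem_filter.1 hB).2
    rw [hUc] at hr
    have h1 := card_breg_pattern hb0 hn U r
    rw [hUc] at h1
    have h1' : (((breg n b).filter fun B => ∀ v, (B v ∩ U).card = r v).card : ℝ) *
        (n * b).choose (b * u) ≤ Q * (∏ v, (b.choose (r v) : ℝ)) * (breg n b).card := by
      rw [hQ]; exact_mod_cast h1
    have hC : (0 : ℝ) < (n * b).choose (b * u) := by
      exact_mod_cast Nat.choose_pos (by rw [mul_comm]; exact Nat.mul_le_mul_right b hun)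
    rw [div_mul_eq_mul_div, le_div_iff₀ hP0]
    refine le_of_mul_le_mul_right ?_ hC
    calc _ = P * ((((breg n b).filter fun B => ∀ v, (B v ∩ U).card = r v).card : ℝ) *
          (n * b).choose (b * u)) := by ring
      _ ≤ P * (Q * (∏ v, (b.choose (r v) : ℝ)) * (breg n b).card) :=
        mul_le_mul_of_nonneg_left h1' hP0.le
      _ = (Q * (breg n b).card) * (P * ∏ v, (b.choose (r v) : ℝ)) := by ring
      _ ≤ (Q * (breg n b).card) * ((n * b + 1) * θ ^ n * (n * b).choose (b * u)) :=
        mul_le_mul_of_nonneg_left (hent r hr) (by positivity)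
      _ = _ := by ring
  refine (Finset.sum_le_sum hone).trans ?_
  rw [Finset.sum_const, nsmul_eq_mul]
  calc _ ≤ P * (Q * ((n * b + 1) * θ ^ n) / P * (compatF k n a p).card) :=
        mul_le_mul_of_nonneg_right (card_nearby hu hun p c j) (by positivity)
    _ = _ := by field_simp

/-- A bound for the conditional probability of `E` given each equipartition bounds `rsbmP`; if there
are no compatible pairs at all, `rsbmP` is the junk value `0 / 0 = 0`. -/
lemma rsbmP_le {k n : ℕ} {a : Fin k → Fin k → ℕ}
    {E : (Fin (k * n) → Fin k) → SimpleGraph (Fin (k * n)) → Prop} {e : ℝ} (he : 0 ≤ e)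
    (h : ∀ p, IsEquiPartition k n p →
      (({G | Compat k n a p G ∧ E p G} : Set (SimpleGraph (Fin (k * n)))).ncard : ℝ) ≤
        e * (compatF k n a p).card) : rsbmP k n a E ≤ e := by
  classical
  have hfib : ∀ S : Set ((Fin (k * n) → Fin k) × SimpleGraph (Fin (k * n))),
      S.ncard = ∑ p, {G | (p, G) ∈ S}.ncard := by
    intro S
    rw [Set.ncard_eq_toFinset_card', Finset.card_eq_sum_card_fiberwise (f := Prod.fst)
      (t := Finset.univ) (fun _ _ => by simp)]
    refine Finset.sum_congr rfl fun p _ => ?_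
    rw [Set.ncard_eq_toFinset_card']
    refine Finset.card_bij' (fun z _ => z.2) (fun G _ => (p, G)) ?_ ?_ ?_ ?_
    · rintro ⟨p', G⟩ hz
      simp only [Finset.mem_filter, Set.mem_toFinset] at hz
      obtain ⟨hz, rfl⟩ := hz
      simpa using hz
    · intro G hG; simpa using hG
    · rintro ⟨p', G⟩ hz
      simp only [Finset.mem_filter, Set.mem_toFinset] at hz
      rw [← hz.2]
    · intro G _; rfl
  unfold rsbmP
  refine div_le_of_le_mul₀ (by positivity) he ?_
  rw [hfib, hfib, Nat.cast_sum, Nat.cast_sum, Finset.mul_sum]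
  refine Finset.sum_le_sum fun p _ => ?_
  by_cases hp : IsEquiPartition k n p
  · have h1 := h p hp
    have h2 : (compatF k n a p).card =
        ({G | Compat k n a p G} : Set (SimpleGraph (Fin (k * n)))).ncard := by
      rw [← Set.ncard_coe_finset]; congr 1; ext; simp [compatF]
    rw [h2] at h1
    simpa [hp] using h1
  · simp [hp]

lemma tendsto_error (b : ℕ) {θ : ℝ} (h0 : 0 ≤ θ) (h1 : θ < 1) :
    Tendsto (fun n : ℕ => (n + 1 : ℝ) *
      (2 * ((n * b : ℝ) ^ 2) ^ (4 * b ^ 2) * ((n * b + 1) * θ ^ n))) atTop (nhds 0) := by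
  have T : ∀ d : ℕ, Tendsto (fun n : ℕ => (n : ℝ) ^ d * θ ^ n) atTop (nhds 0) := fun d =>
    tendsto_pow_const_mul_const_pow_of_lt_one d h0 h1
  set D := 2 * (4 * b ^ 2)
  have h := ((((T (D + 2)).const_mul (b : ℝ)).add ((T (D + 1)).const_mul (b + 1 : ℝ))).add
    (T D)).const_mul (2 * (b : ℝ) ^ D)
  simp only [mul_zero, add_zero] at h
  refine h.congr fun n => ?_
  rw [← pow_mul, mul_pow]
  ring

open Classical in
/-- For a fixed equipartition `p`, the union bound over the recolouring `c`, the cluster `j` attaining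
the maximal number `u` of exceptional vertices, and the partition `q`. The bipartite subgraph
resampled is the one between `j` and an arbitrary different cluster `other j`. -/
lemma card_bad_le {k n : ℕ} {a : Fin k → Fin k → ℕ} (hsymm : ∀ i j, a i j = a j i)
    (hpos : ∀ i j, 0 < a i j) (hn : ∀ i j, 2 * a i j < n) (other : Fin k → Fin k)
    (hother : ∀ j, other j ≠ j) (θ : Fin k → ℝ) (hθ : ∀ j, 0 < θ j) {ρ : ℝ} (hρ : 0 < ρ)
    (hent : ∀ j, ∀ n u : ℕ, 0 < n → u ≤ n → ρ * n ≤ u → k * u + n ≤ k * n →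
      ∀ r : Fin n → ℕ, ∑ v, r v = a (other j) j * u →
        (3 * k * n / u : ℝ) ^ (k * u) * ∏ v, ((a (other j) j).choose (r v) : ℝ) ≤
          (n * a (other j) j + 1) * θ j ^ n * (n * a (other j) j).choose (a (other j) j * u))
    {p : Fin (k * n) → Fin k} (hp : IsEquiPartition k n p)
    (E : SimpleGraph (Fin (k * n)) → Prop)
    (hE : ∀ G, E G → ∃ (q : Fin (k * n) → Fin k) (c : Fin k → Fin k) (j : Fin k) (u : ℕ),
      Compat k n a q G ∧ q ∈ nearby p c j u ∧ u ≤ n ∧ ρ * n ≤ u ∧ k * u + n ≤ k * n) :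
    (({G | Compat k n a p G ∧ E G} : Set (SimpleGraph (Fin (k * n)))).ncard : ℝ) ≤
      (∑ j, Fintype.card (Fin k → Fin k) * ((n + 1 : ℝ) *
        (2 * ((n * a (other j) j : ℝ) ^ 2) ^ (4 * a (other j) j ^ 2) *
          ((n * a (other j) j + 1) * θ j ^ n)))) * (compatF k n a p).card := by
  set R : Finset ℕ := (Finset.range (n + 1)).filter fun u => ρ * n ≤ u ∧ k * u + n ≤ k * n
  set e : Fin k → ℝ := fun j => 2 * ((n * a (other j) j : ℝ) ^ 2) ^ (4 * a (other j) j ^ 2) *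
    ((n * a (other j) j + 1) * θ j ^ n) with he
  have he0 : ∀ j, 0 ≤ e j := fun j => by have := hθ j; positivity
  have hsub : ({G | Compat k n a p G ∧ E G} : Set (SimpleGraph (Fin (k * n)))) ⊆
      (Finset.univ.biUnion fun j : Fin k => Finset.univ.biUnion fun c : Fin k → Fin k =>
        R.biUnion fun u => (nearby p c j u).biUnion fun q =>
          compatF k n a p ∩ compatF k n a q : Finset (SimpleGraph (Fin (k * n)))) := by
    rintro G ⟨hG, hEG⟩
    obtain ⟨q, c, j, u, hq, hqn, hun, hρu, hku⟩ := hE G hEG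
    simp only [Finset.coe_biUnion, Set.mem_iUnion, Finset.mem_coe]
    refine ⟨j, Finset.mem_univ _, c, Finset.mem_univ _, u, ?_, q, hqn, ?_⟩
    · exact Finset.mem_filter.2 ⟨Finset.mem_range.2 (by omega), hρu, hku⟩
    · simp only [compatF, Finset.mem_inter, Finset.mem_filter, Finset.mem_univ, true_and]
      exact ⟨hG, hq⟩
  have h1 := Set.ncard_le_ncard hsub (Set.toFinite _)
  rw [Set.ncard_coe_finset] at h1
  have h2 : ∀ j : Fin k, ∀ c : Fin k → Fin k, ∀ u ∈ R,
      ((((nearby p c j u).biUnion fun q => compatF k n a p ∩ compatF k n a q).card : ℕ) : ℝ) ≤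
        e j * (compatF k n a p).card := by
    intro j c u hu
    obtain ⟨hu1, hρu, hku⟩ := Finset.mem_filter.1 hu
    have hun : u ≤ n := by have := Finset.mem_range.1 hu1; omega
    have hn0 : 0 < n := by have := hn j j; omega
    have hu0 : 0 < u := by
      have : (0 : ℝ) < u := lt_of_lt_of_le (by positivity) hρu
      exact_mod_cast this
    refine le_trans (Nat.cast_le.2 Finset.card_biUnion_le) ?_
    rw [Nat.cast_sum]
    exact sum_nearby_le hsymm hp (hother j) rfl (hpos _ _) (hn _ _) hu0 hun (hθ j).le
      (hent j n u hn0 hun hρu hku) c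
  have hR : (R.card : ℝ) ≤ n + 1 := by
    have : R.card ≤ n + 1 := (Finset.card_filter_le _ _).trans (by simp)
    exact_mod_cast this
  refine (Nat.cast_le.2 (h1.trans Finset.card_biUnion_le)).trans ?_
  rw [Nat.cast_sum, Finset.sum_mul]
  refine Finset.sum_le_sum fun j _ => (Nat.cast_le.2 Finset.card_biUnion_le).trans ?_
  rw [Nat.cast_sum]
  calc _ ≤ ∑ c : Fin k → Fin k, (n + 1 : ℝ) * e j * (compatF k n a p).card := by
        refine Finset.sum_le_sum fun c _ => (Nat.cast_le.2 Finset.card_biUnion_le).trans ?_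
        rw [Nat.cast_sum]
        refine (Finset.sum_le_sum (h2 j c)).trans ?_
        rw [Finset.sum_const, nsmul_eq_mul, mul_assoc (n + 1 : ℝ)]
        have := he0 j
        exact mul_le_mul_of_nonneg_right hR (by positivity)
    _ = _ := by
        rw [Finset.sum_const, nsmul_eq_mul, Finset.card_univ]; ring

/-- Proposition 3.2 of the paper.  Fix nonnegative rationals
`α₁, …, α_k` summing to `1`, at least two of which are positive.  Under hypotheses (1), (2)
on `A` and for all entries of `A` sufficiently large, along integers `n` for which all
`α_ℓ n` are integers, the probability that there exist subsets `C'_ℓ ⊆ C_ℓ` with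
`|C'_ℓ| = α_ℓ n`, whose union `D` (playing the role of cluster `1`, the index `i0`) together
with a partition `D_2, …, D_k` of the remaining vertices into sets of size `n` satisfies all
the intra- and inter-cluster regularity constraints of the model, tends to `0`. -/
theorem rsbm_prop_C_not_cluster (k : ℕ) (hk : 3 ≤ k) (i0 : Fin k) (hi0 : i0.val = 0)
    (C : ℝ) (hC : 0 < C)
    (δ ε : Fin k → Fin k → ℝ)
    (hδr : ∀ i j, 0 < δ i j ∧ δ i j < 1 / 4)
    (hεr : ∀ i j, 0 < ε i j ∧ ε i j < 1 / 4) :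
    ∃ M : ℕ, ∀ d : ℕ, ∀ a : Fin k → Fin k → ℕ,
      (∀ i j, 0 < a i j) →
      (∀ i j, a i j = a j i) →
      (∀ i, ∑ j, a i j = d) →
      (∀ i j, M ≤ a i j) →
      (∀ i, (((Finset.univ.erase i).sup (a i) : ℕ) : ℝ) < C * a i i) →
      ((∃ i j, a i i ≠ a j j) →
        (∀ i j, a i i < a j j → (1 / 2 + 2 * δ i j) * (a j j : ℝ) ≤ (a i i : ℝ)) ∧
        (∀ i j, a j j < a i i →
          (a i i : ℝ) - (a j j : ℝ) < (((Finset.univ.erase j).sup (a j) : ℕ) : ℝ) →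
          (((Finset.univ.erase j).sup (a j) : ℕ) : ℝ) ≤ (1 / 2 - 2 * ε i j) * a i i)) →
      ∀ α : Fin k → ℚ,
        (∀ l, 0 ≤ α l) →
        (∑ l, α l = 1) →
        (∃ l l', l ≠ l' ∧ 0 < α l ∧ 0 < α l') →
        Tendsto
          (fun n : ℕ => rsbmP k n a (fun p G =>
            ∃ Cs : Fin k → Set (Fin (k * n)),
              (∀ l, Cs l ⊆ p ⁻¹' {l}) ∧
              (∀ l, ((Cs l).ncard : ℚ) = α l * n) ∧
              ∃ Ds : Fin k → Set (Fin (k * n)),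
                Ds i0 = (⋃ l, Cs l) ∧
                (∀ i, i ≠ i0 → (Ds i).ncard = n) ∧
                (∀ i j, i ≠ j → Disjoint (Ds i) (Ds j)) ∧
                (⋃ i, Ds i) = Set.univ ∧
                (∀ i j, ∀ v ∈ Ds i, degIn G v (Ds j) = a i j)))
          (atTop ⊓ 𝓟 {n : ℕ | ∀ l, ∃ m : ℕ, α l * n = (m : ℚ)}) (nhds 0) := by
  obtain ⟨M, hM⟩ := entropy_le k (by omega)
  refine ⟨M, fun d a hpos hsymm hsum hMa _ _ α hα0 hα1 hα => ?_⟩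
  obtain ⟨l, l', hll, hl, hl'⟩ := hα
  have hαl : α l < 1 := by
    have h := Finset.add_le_sum (f := α) (s := Finset.univ) (fun i _ => hα0 i)
      (Finset.mem_univ l) (Finset.mem_univ l') hll
    linarith
  have hl0 : (0 : ℝ) < α l := by exact_mod_cast hl
  have hl1 : (α l : ℝ) < 1 := by exact_mod_cast hαl
  set ρ : ℝ := min (α l) (1 - α l)
  have hρ : 0 < ρ := lt_min hl0 (by linarith)
  have hex : ∀ j : Fin k, ∃ m : Fin k, m ≠ j := by
    intro j
    have : Nontrivial (Fin k) := Fin.nontrivial_iff_two_le.2 (by omega)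
    exact exists_ne j
  choose other hother using hex
  have hθ := fun j => hM (a (other j) j) (hMa _ _) ρ hρ
  choose θ hθ0 hθ1 hent using hθ
  set err : ℕ → ℝ := fun n => ∑ j, Fintype.card (Fin k → Fin k) * ((n + 1 : ℝ) *
        (2 * ((n * a (other j) j : ℝ) ^ 2) ^ (4 * a (other j) j ^ 2) *
          ((n * a (other j) j + 1) * θ j ^ n))) with herr
  have herr0 : ∀ n, 0 ≤ err n := fun n => Finset.sum_nonneg fun j _ => by
    have := hθ0 j; positivity
  -- The error is a polynomial in `n` times an exponentially small factor.
  have hlim : Tendsto err atTop (nhds 0) := by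
    have h := tendsto_finsetSum (Finset.univ : Finset (Fin k)) fun j _ =>
      (tendsto_error (a (other j) j) (hθ0 j).le (hθ1 j)).const_mul
        (Fintype.card (Fin k → Fin k) : ℝ)
    simpa only [mul_zero, Finset.sum_const_zero] using h
  refine squeeze_zero' (Eventually.of_forall fun n => by unfold rsbmP; positivity) ?_
    (hlim.mono_left inf_le_left)
  have had : ∀ i j, a i j ≤ d := fun i j => by
    rw [← hsum i]
    exact Finset.single_le_sum (f := a i) (fun _ _ => Nat.zero_le _) (Finset.mem_univ j)
  filter_upwards [inf_le_left (a := atTop) (eventually_gt_atTop (2 * d))] with n hn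
  refine rsbmP_le (herr0 n) fun p hp => ?_
  refine card_bad_le hsymm hpos (fun i j => by have := had i j; omega) other hother θ hθ0 hρ hent
    hp _ ?_
  rintro G ⟨Cs, hCs, hCn, Ds, hD, -, hdis, hcov, hreg⟩
  have hq : ∀ v, ∃ i, v ∈ Ds i := fun v => by
    have : v ∈ ⋃ i, Ds i := hcov ▸ Set.mem_univ v
    simpa using this
  choose q hq using hq
  have hqD : ∀ i, q ⁻¹' {i} = Ds i := by
    intro i
    ext v
    constructor
    · rintro rfl; exact hq v
    · intro hv
      by_contra hne
      exact Set.disjoint_left.1 (hdis _ _ hne) (hq v) hv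
  have hcompat : Compat k n a q G := fun v j => by
    rw [hqD]; exact hreg _ _ v (hq v)
  have hint : p ⁻¹' {l} ∩ q ⁻¹' {i0} = Cs l := by
    rw [hqD, hD]
    ext v
    simp only [Set.mem_inter_iff, Set.mem_iUnion]
    constructor
    · rintro ⟨hv, m, hm⟩
      have h1 : p v = m := hCs m hm
      have h2 : p v = l := hv
      rw [← h2, h1]; exact hm
    · intro hv; exact ⟨hCs l hv, l, hv⟩
  have hcard : ((p ⁻¹' {l} ∩ q ⁻¹' {i0}).ncard : ℝ) = α l * n := by
    rw [hint]; exact_mod_cast hCn l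
  obtain ⟨c, j, u, h1, h2, h3, h4⟩ := exists_nearby hp q l i0 hcard
  exact ⟨q, c, j, u, hcompat, h1, h2, h3, h4⟩
end

section
/- Let G be a simple graph whose vertex set is the disjoint union of sets 𝒞_1, …, 𝒞_k, each of size n, such that every vertex of 𝒞_i has exactly a_{i,i} neighbours inside 𝒞_i. Suppose there are subsets C'_ℓ ⊆ 𝒞_ℓ for ℓ = 1, …, k with D = ∪_ℓ C'_ℓ and |C'_i| = α_i·n, such that the induced subgraph on D is a_{1,1}-regular, and there is a partition of the vertices outside D into sets D_2, …, D_k such that every vertex u ∈ D_j has exactly a_{1,j} neighbours in D (for each j = 2, …, k). Let B_1 = max{a_{1,ℓ} : ℓ ∈ {2,…,k}}. If a_{i,i} > a_{1,1}, then α_i ≤ B_1/(a_{i,i} − a_{1,1} + B_1). -/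
theorem degIn_mono {V : Type} [Finite V] (G : SimpleGraph V) (v : V) {S T : Set V} (h : S ⊆ T) :
    degIn G v S ≤ degIn G v T :=
  Set.ncard_le_ncard (Set.inter_subset_inter_left _ h) (Set.toFinite _)

theorem degIn_le_add_diff {V : Type} [Finite V] (G : SimpleGraph V) (v : V) (S T : Set V) :
    degIn G v T ≤ degIn G v S + degIn G v (T \ S) := by
  refine (Set.ncard_le_ncard ?_ (Set.toFinite _)).trans (Set.ncard_union_le _ _)
  rintro x ⟨hxT, hx⟩
  by_cases hxS : x ∈ S
  · exact Or.inl ⟨hxS, hx⟩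
  · exact Or.inr ⟨⟨hxT, hxS⟩, hx⟩

/-- Both sides bound the number of edges between `S` and `T` (counted as pairs in `S × T`), the left
one from below and the right one from above. -/
theorem ncard_mul_le_of_degIn {V : Type} [Fintype V] (G : SimpleGraph V) (S T : Set V) (m b : ℕ)
    (hm : ∀ v ∈ S, m ≤ degIn G v T) (hb : ∀ u ∈ T, degIn G u S ≤ b) :
    S.ncard * m ≤ T.ncard * b := by
  classical
  rw [Set.ncard_eq_toFinset_card' S, Set.ncard_eq_toFinset_card' T]
  refine Finset.card_mul_le_card_mul G.Adj (fun v hv => ?_) (fun u hu => ?_)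
  · refine (hm v (by simpa using hv)).trans (le_of_eq ?_)
    rw [degIn, ← Set.ncard_coe_finset]
    congr 1
    ext x
    simp [Finset.bipartiteAbove]
  · refine le_trans (le_of_eq ?_) (hb u (by simpa using hu))
    rw [degIn, ← Set.ncard_coe_finset]
    congr 1
    ext x
    simp [Finset.bipartiteBelow, G.adj_comm]

/-- (Lemma "simpler" of the paper.)  Suppose the vertex set of `G` is
partitioned into clusters `𝒞₁, …, 𝒞_k` of size `n` each, with every vertex of `𝒞_ℓ`
having exactly `a_{ℓ,ℓ}` neighbours in `𝒞_ℓ`.  Suppose `C'_ℓ ⊆ 𝒞_ℓ` with `|C'_i| = α_i n`,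
the union `D = ⋃ C'_ℓ` induces an `a_{1,1}`-regular subgraph, and the vertices outside `D`
are partitioned into sets `D_ℓ` (`ℓ ≠ 1`) each vertex of which has exactly `a_{1,ℓ}`
neighbours in `D`.  Let `B₁ = max {a_{1,ℓ} : ℓ ≠ 1}`.  If `a_{i,i} > a_{1,1}` then
`α_i ≤ B₁ / (a_{i,i} - a_{1,1} + B₁)`.  (Cluster `1` is the index `i0` with `i0.val = 0`.) -/
theorem alpha_le_of_regular {V : Type} [Fintype V] (G : SimpleGraph V)
    (k n : ℕ) (hk : 2 ≤ k) (hn : 0 < n) (i0 : Fin k) (hi0 : i0.val = 0)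
    (a : Fin k → Fin k → ℕ) (hapos : ∀ l l', 0 < a l l')
    (𝒞 : Fin k → Set V)
    (hCdisj : ∀ l l', l ≠ l' → Disjoint (𝒞 l) (𝒞 l'))
    (hCcover : (⋃ l, 𝒞 l) = Set.univ)
    (hCsize : ∀ l, (𝒞 l).ncard = n)
    (hCreg : ∀ l, ∀ v ∈ 𝒞 l, degIn G v (𝒞 l) = a l l)
    (C' : Fin k → Set V) (hsub : ∀ l, C' l ⊆ 𝒞 l)
    (i : Fin k) (αi : ℝ) (hαi0 : 0 ≤ αi) (hαi1 : αi ≤ 1)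
    (hcard : ((C' i).ncard : ℝ) = αi * n)
    (hDreg : ∀ v ∈ ⋃ l, C' l, degIn G v (⋃ l, C' l) = a i0 i0)
    (Ds : Fin k → Set V)
    (hDsdisj : ∀ l l', l ≠ l' → Disjoint (Ds l) (Ds l'))
    (hDscover : (⋃ l ∈ {l : Fin k | l ≠ i0}, Ds l) = Set.univ \ ⋃ l, C' l)
    (hDsdeg : ∀ l, l ≠ i0 → ∀ u ∈ Ds l, degIn G u (⋃ l', C' l') = a i0 l)
    (hii : a i0 i0 < a i i) :
    αi ≤ (((Finset.univ.erase i0).sup (a i0) : ℕ) : ℝ) /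
      ((a i i : ℝ) - (a i0 i0 : ℝ) + ((Finset.univ.erase i0).sup (a i0) : ℕ)) := by
  set B := (Finset.univ.erase i0).sup (a i0) with hB
  have hout : ∀ v ∈ C' i, a i i - a i0 i0 ≤ degIn G v (𝒞 i \ C' i) := by
    intro v hv
    have h1 := hCreg i v (hsub i hv)
    have h2 := hDreg v (Set.mem_iUnion.2 ⟨i, hv⟩)
    have h3 := degIn_mono G v (Set.subset_iUnion C' i)
    have h4 := degIn_le_add_diff G v (C' i) (𝒞 i)
    omega
  have hin : ∀ u ∈ 𝒞 i \ C' i, degIn G u (C' i) ≤ B := by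
    rintro u ⟨hu, hu'⟩
    have huD : u ∈ Set.univ \ ⋃ l, C' l := by
      refine ⟨trivial, fun h => ?_⟩
      obtain ⟨l, hl⟩ := Set.mem_iUnion.1 h
      by_cases hli : l = i
      · exact hu' (hli ▸ hl)
      · exact Set.disjoint_left.1 (hCdisj l i hli) (hsub l hl) hu
    rw [← hDscover] at huD
    simp only [Set.mem_iUnion, Set.mem_ofPred_eq] at huD
    obtain ⟨l, hl, hul⟩ := huD
    calc degIn G u (C' i) ≤ degIn G u (⋃ l', C' l') := degIn_mono G u (Set.subset_iUnion C' i)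
      _ = a i0 l := hDsdeg l hl u hul
      _ ≤ B := Finset.le_sup (f := a i0) (by simp [hl])
  have hcount := ncard_mul_le_of_degIn G (C' i) (𝒞 i \ C' i) _ _ hout hin
  have hsize : ((𝒞 i \ C' i).ncard : ℝ) = n - αi * n := by
    have h := Set.ncard_sdiff_add_ncard_of_subset (hsub i) (Set.toFinite _)
    rw [hCsize] at h
    rw [← hcard, ← h]
    push_cast
    ring
  have hcountR : αi * n * ((a i i : ℝ) - a i0 i0) ≤ (n - αi * n) * B := by
    rw [← hsize, ← hcard, ← Nat.cast_sub hii.le]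
    exact_mod_cast hcount
  have hn' : (0 : ℝ) < n := by exact_mod_cast hn
  have hd : (0 : ℝ) < (a i i : ℝ) - a i0 i0 := sub_pos.2 (by exact_mod_cast hii)
  rw [le_div_iff₀ (by positivity)]
  refine le_of_mul_le_mul_left ?_ hn'
  linarith
end
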